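/- Let Λ be a finite simple graph that is a linear forest. Then for any finite simple graph Γ, if there is an injective group homomorphism from G(Λ) into G(Γ), then Λ embeds into Γ as a full (induced) subgraph. -/

import Mathlib

open SimpleGraph

/-- The set of commutator relations of a graph: one commutator for each edge. -/
def raagRels {V : Type} (G : SimpleGraph V) : Set (FreeGroup V) :=
  {r | ∃ u v : V, G.Adj u v ∧
    r = FreeGroup.of u * FreeGroup.of v * (FreeGroup.of u)⁻¹ * (FreeGroup.of v)⁻¹}

/-- The right-angled Artin group `A(G)` of a graph `G`. -/
abbrev RAAG {V : Type} (G : SimpleGraph V) : Type := PresentedGroup (raagRels G)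

/-- `G(Γ) = A(Γᶜ)`, the RAAG on the complement graph. -/
abbrev GG {V : Type} (G : SimpleGraph V) : Type := RAAG Gᶜ

/-- A linear forest: an acyclic graph all of whose vertices have degree at most 2. -/
def IsLinearForest {V : Type} (G : SimpleGraph V) : Prop :=
  G.IsAcyclic ∧ ∀ v : V, (G.neighborSet v).ncard ≤ 2

/-- The star of a vertex: the vertex together with its neighbours. -/
def starSet {V : Type} (G : SimpleGraph V) (v : V) : Set V :=
  insert v (G.neighborSet v)

/-- The double `D_v(G)` of `G` along the star of `v`: original vertices together with
copies of the vertices outside the star. -/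
def GraphDouble {V : Type} (G : SimpleGraph V) (v : V) :
    SimpleGraph (V ⊕ {w : V // w ∉ starSet G v}) :=
  SimpleGraph.fromRel (fun x y =>
    match x, y with
    | Sum.inl a, Sum.inl b => G.Adj a b
    | Sum.inr a, Sum.inr b => G.Adj a.1 b.1
    | Sum.inl a, Sum.inr b => a ∈ starSet G v ∧ G.Adj a b.1
    | Sum.inr _, Sum.inl _ => False)

/-- Subdivision of the edge `[v,w]` of `Λ`, with `none` as the new vertex. -/
def SubdivEdge {V : Type} (Λ : SimpleGraph V) (v w : V) : SimpleGraph (Option V) :=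
  SimpleGraph.fromRel (fun x y =>
    match x, y with
    | some a, some b => Λ.Adj a b ∧ ¬((a = v ∧ b = w) ∨ (a = w ∧ b = v))
    | some a, none => a = v ∨ a = w
    | none, some _ => False
    | none, none => False)

/-- The graph `Λ_u⁻(w₁,w₂)`, with `none` as the new vertex `v`. -/
def MinusGraph {V : Type} (Λ : SimpleGraph V) (u w₁ w₂ : V) : SimpleGraph (Option V) :=
  SimpleGraph.fromRel (fun x y =>
    match x, y with
    | some a, some b => Λ.Adj a b ∧
        ¬((a = u ∧ b = w₁) ∨ (a = w₁ ∧ b = u) ∨ (a = u ∧ b = w₂) ∨ (a = w₂ ∧ b = u))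
    | some a, none => a = w₁ ∨ a = u ∨ a = w₂
    | none, some _ => False
    | none, none => False)

/-- The graph `Λ_u⁺(w₁,w₂)`: `Λ_u⁻(w₁,w₂)` with the edge `[u,w₂]` added back. -/
def PlusGraph {V : Type} (Λ : SimpleGraph V) (u w₁ w₂ : V) : SimpleGraph (Option V) :=
  SimpleGraph.fromRel (fun x y =>
    (MinusGraph Λ u w₁ w₂).Adj x y ∨ (x = some u ∧ y = some w₂))

set_option linter.unusedVariables false


namespace RG

section A
open scoped Classical

variable {V : Type} {Γ : SimpleGraph V}

/-- The generator of `G(Γ)` attached to a vertex. -/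
def gen (v : V) : GG Γ := PresentedGroup.of v

theorem gen_commute {u v : V} (h : ¬ Γ.Adj u v) : Commute (gen u : GG Γ) (gen v) := by
  by_cases huv : u = v
  · subst huv; exact Commute.refl _
  have h1 : FreeGroup.of u * FreeGroup.of v * (FreeGroup.of u)⁻¹ * (FreeGroup.of v)⁻¹ ∈
      raagRels Γᶜ := ⟨u, v, by simp [SimpleGraph.compl_adj, huv, h], rfl⟩
  have h2 := PresentedGroup.one_of_mem h1
  simp only [map_mul, map_inv] at h2
  have h3 : (gen u : GG Γ) * gen v * (gen u)⁻¹ * (gen v)⁻¹ = 1 := h2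
  show _ = _
  rw [mul_inv_eq_one, mul_inv_eq_iff_eq_mul] at h3
  exact h3

/-- Homomorphisms out of `G(Γ)`. -/
def liftG {H : Type*} [Group H] (f : V → H)
    (hf : ∀ u v, u ≠ v → ¬ Γ.Adj u v → Commute (f u) (f v)) : GG Γ →* H :=
  PresentedGroup.toGroup (f := f) (by
    rintro r ⟨u, v, huv, rfl⟩
    rw [SimpleGraph.compl_adj] at huv
    have := hf u v huv.1 huv.2
    simp only [map_mul, map_inv, FreeGroup.lift_apply_of]
    rw [mul_inv_eq_one, mul_inv_eq_iff_eq_mul]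
    exact this)

@[simp] theorem liftG_gen {H : Type*} [Group H] (f : V → H)
    (hf : ∀ u v, u ≠ v → ¬ Γ.Adj u v → Commute (f u) (f v)) (v : V) :
    liftG f hf (gen v) = f v := PresentedGroup.toGroup.of _

theorem hom_ext {H : Type*} [Group H] {φ ψ : GG Γ →* H} (h : ∀ v, φ (gen v) = ψ (gen v)) :
    φ = ψ := PresentedGroup.ext h

theorem closure_gen : Subgroup.closure (Set.range (gen : V → GG Γ)) = ⊤ :=
  PresentedGroup.closure_range_of _

theorem gg_induction {p : GG Γ → Prop} (h1 : p 1) (hm : ∀ x y, p x → p y → p (x * y))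
    (hi : ∀ x, p x → p x⁻¹) (hg : ∀ v, p (gen v)) (x : GG Γ) : p x := by
  have hx : x ∈ Subgroup.closure (Set.range (gen : V → GG Γ)) := by rw [closure_gen]; trivial
  induction hx using Subgroup.closure_induction with
  | mem x hx => obtain ⟨v, rfl⟩ := hx; exact hg v
  | one => exact h1
  | mul x y _ _ hx hy => exact hm x y hx hy
  | inv x _ hx => exact hi x hx

/-- Projection killing generators outside `S`. -/
noncomputable def pj (S : Set V) : GG Γ →* GG Γ :=
  liftG (fun v => if v ∈ S then gen v else 1) (by
    intro u v _ h
    split_ifs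
    · exact gen_commute h
    · exact Commute.one_right _
    · exact Commute.one_left _
    · exact Commute.one_left _)

theorem pj_gen (S : Set V) (v : V) : pj S (gen v : GG Γ) = if v ∈ S then gen v else 1 := by
  simp [pj]

theorem pj_gen_mem {S : Set V} {v : V} (h : v ∈ S) : pj S (gen v : GG Γ) = gen v := by
  simp [pj, h]

theorem pj_gen_notMem {S : Set V} {v : V} (h : v ∉ S) : pj S (gen v : GG Γ) = 1 := by
  simp [pj, h]

/-- The parabolic subgroup on `S`. -/
noncomputable def par (S : Set V) : Subgroup (GG Γ) := (pj S).eqLocus (MonoidHom.id _)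

theorem mem_par {S : Set V} {g : GG Γ} : g ∈ par S ↔ pj S g = g := Iff.rfl

theorem pj_pj (S T : Set V) (g : GG Γ) : pj S (pj T g) = pj (S ∩ T) g := by
  have : (pj S).comp (pj T) = (pj (S ∩ T) : GG Γ →* GG Γ) := by
    apply hom_ext
    intro v
    by_cases h1 : v ∈ S <;> by_cases h2 : v ∈ T <;> simp [pj, h1, h2]
  exact DFunLike.congr_fun this g

theorem pj_mem (S : Set V) (g : GG Γ) : pj S g ∈ par S := by
  rw [mem_par, pj_pj, Set.inter_self]

theorem pj_univ (g : GG Γ) : pj Set.univ g = g := by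
  have : (pj Set.univ) = (MonoidHom.id _ : GG Γ →* GG Γ) := by
    apply hom_ext
    intro v
    simp [pj]
  exact DFunLike.congr_fun this g

theorem pj_empty (g : GG Γ) : pj ∅ g = 1 := by
  have : (pj ∅) = (1 : GG Γ →* GG Γ) := by
    apply hom_ext
    intro v
    simp [pj]
  exact DFunLike.congr_fun this g

theorem mem_par_univ (g : GG Γ) : g ∈ par (Set.univ : Set V) := pj_univ g

theorem gen_mem {S : Set V} {v : V} (h : v ∈ S) : (gen v : GG Γ) ∈ par S := pj_gen_mem h

theorem gen_ne_one (v : V) : (gen v : GG Γ) ≠ 1 := by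
  intro h
  have := congrArg (liftG (Γ := Γ) (fun _ => Multiplicative.ofAdd (1 : ℤ))
    (fun _ _ _ _ => Commute.all _ _)) h
  simp only [liftG_gen, map_one] at this
  exact absurd (congrArg Multiplicative.toAdd this) (by simp)

theorem gen_mem_iff {S : Set V} {v : V} : (gen v : GG Γ) ∈ par S ↔ v ∈ S := by
  refine ⟨fun h => ?_, gen_mem⟩
  by_contra hv
  rw [mem_par, pj_gen_notMem hv] at h
  exact gen_ne_one v h.symm

theorem par_inter {S T : Set V} {g : GG Γ} (h1 : g ∈ par S) (h2 : g ∈ par T) :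
    g ∈ par (S ∩ T) := by
  rw [mem_par] at *
  rw [← pj_pj, h2, h1]

theorem par_mono {S T : Set V} (h : S ⊆ T) {g : GG Γ} (h1 : g ∈ par S) : g ∈ par T := by
  rw [mem_par] at *
  conv_lhs => rw [← h1]
  rw [pj_pj, Set.inter_eq_right.mpr h, h1]

theorem par_empty {g : GG Γ} (h : g ∈ par (∅ : Set V)) : g = 1 := by
  rw [mem_par, pj_empty] at h; exact h.symm

theorem pj_mem_par {S T : Set V} {g : GG Γ} (h : g ∈ par T) : pj S g ∈ par (S ∩ T) := by
  rw [← mem_par.1 h, pj_pj]; exact pj_mem _ _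

theorem pj_mem_par' {S T : Set V} {g : GG Γ} (h : g ∈ par T) : pj S g ∈ par T :=
  par_mono Set.inter_subset_right (pj_mem_par h)

theorem par_eq_closure (S : Set V) :
    (par S : Subgroup (GG Γ)) = Subgroup.closure (gen '' S) := by
  apply le_antisymm
  · intro g hg
    rw [← mem_par.1 hg]
    clear hg
    induction g using gg_induction with
    | h1 => simp
    | hm x y hx hy => rw [map_mul]; exact mul_mem hx hy
    | hi x hx => rw [map_inv]; exact inv_mem hx
    | hg v =>
      rw [pj_gen]
      split_ifs with h
      · exact Subgroup.subset_closure ⟨v, h, rfl⟩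
      · exact one_mem _
  · rw [Subgroup.closure_le]
    rintro _ ⟨v, hv, rfl⟩
    exact gen_mem hv

theorem par_induction {S : Set V} {p : GG Γ → Prop} (h1 : p 1)
    (hm : ∀ x y, p x → p y → p (x * y))
    (hi : ∀ x, p x → p x⁻¹) (hg : ∀ v ∈ S, p (gen v)) {x : GG Γ} (hx : x ∈ par S) : p x := by
  rw [par_eq_closure] at hx
  induction hx using Subgroup.closure_induction with
  | mem x hx => obtain ⟨v, hv, rfl⟩ := hx; exact hg v hv
  | one => exact h1
  | mul x y _ _ hx hy => exact hm x y hx hy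
  | inv x _ hx => exact hi x hx

theorem commute_of_gens {S : Set V} {z : GG Γ} (h : ∀ v ∈ S, Commute z (gen v)) {x : GG Γ}
    (hx : x ∈ par S) : Commute z x :=
  par_induction (p := fun x => Commute z x) (Commute.one_right z)
    (fun _ _ => Commute.mul_right) (fun _ h => h.inv_right) h hx

/-- Vertices outside `S` and not adjacent to anything in `S`. -/
def perp (Γ : SimpleGraph V) (S : Set V) : Set V := {t | ∀ s ∈ S, s ≠ t ∧ ¬ Γ.Adj s t}

theorem perp_anti {S T : Set V} (h : S ⊆ T) : perp Γ T ⊆ perp Γ S := fun _ ht s hs => ht s (h hs)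

theorem perp_symm {S T : Set V} (h : T ⊆ perp Γ S) : S ⊆ perp Γ T :=
  fun s hs t ht => ⟨(h ht s hs).1.symm, fun h' => (h ht s hs).2 h'.symm⟩

theorem perp_disj {S T : Set V} (h : T ⊆ perp Γ S) : Disjoint S T := by
  rw [Set.disjoint_left]; intro s hs ht; exact (h ht s hs).1 rfl

theorem par_commute {S T : Set V} (h : T ⊆ perp Γ S) {x y : GG Γ} (hx : x ∈ par S)
    (hy : y ∈ par T) : Commute x y := by
  refine commute_of_gens (fun t ht => ?_) hy
  refine (commute_of_gens (fun s hs => ?_) hx).symm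
  exact (gen_commute (h ht s hs).2).symm

theorem pj_union {S T : Set V} (h : T ⊆ perp Γ S) (g : GG Γ) :
    pj (S ∪ T) g = pj S g * pj T g := by
  induction g using gg_induction with
  | h1 => simp
  | hm x y hx hy =>
    have := par_commute h (pj_mem S y) (pj_mem T x)
    simp only [map_mul, hx, hy]
    simp only [mul_assoc]
    rw [← mul_assoc (pj T x), ← this.eq, mul_assoc]
  | hi x hx =>
    have := par_commute h (pj_mem S x) (pj_mem T x)
    simp only [map_inv, hx, mul_inv_rev]
    exact (this.inv_inv.symm).eq
  | hg v =>
    by_cases h1 : v ∈ S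
    · have h2 : v ∉ T := Set.disjoint_left.1 (perp_disj h) h1
      simp [pj, h1, h2]
    · by_cases h2 : v ∈ T <;> simp [pj, h1, h2]

theorem mem_of_forall [Finite V] {U : Set V} {g : GG Γ} (h : ∀ t, t ∉ U → g ∈ par ({t}ᶜ : Set V)) :
    g ∈ par U := by
  have : ∀ s : Finset V, (∀ t ∈ s, g ∈ par ({t}ᶜ : Set V)) → g ∈ par ((s : Set V)ᶜ) := by
    intro s
    induction s using Finset.induction_on with
    | empty => intro _; simp [mem_par_univ]
    | insert a s ha ih =>
      intro hs
      have h1 := ih (fun t ht => hs t (Finset.mem_insert_of_mem ht))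
      have h2 := hs a (Finset.mem_insert_self _ _)
      refine par_mono ?_ (par_inter h1 h2)
      intro x hx
      simp at hx ⊢
      tauto
  have hf : (Uᶜ : Set V).Finite := Set.toFinite _
  refine par_mono ?_ (this hf.toFinset (fun t ht => h t (by simpa using ht)))
  simp

end A


section B
open scoped Classical

variable {V : Type} {Γ : SimpleGraph V}

/-- Vertices commuting with `t`, other than `t`. -/
def lk (Γ : SimpleGraph V) (t : V) : Set V := {s | s ≠ t ∧ ¬ Γ.Adj s t}

theorem lk_sub (t : V) : lk Γ t ⊆ ({t}ᶜ : Set V) := fun _ hs => hs.1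

theorem mem_perp_singleton {s t : V} : s ∈ perp Γ {t} ↔ s ∈ lk Γ t := by
  simp only [perp, lk, Set.mem_ofPred_eq, Set.mem_singleton_iff, forall_eq, Γ.adj_comm s t]
  exact ⟨fun h => ⟨h.1.symm, h.2⟩, fun h => ⟨h.1.symm, h.2⟩⟩

theorem lk_commute {t : V} {x : GG Γ} (hx : x ∈ par (lk Γ t)) : Commute x (gen t) :=
  (commute_of_gens (z := gen t) (fun s hs => gen_commute (fun h => hs.2 h.symm)) hx).symm

/-- Cosets of the centralizer part of `t`. -/
abbrev Cst (Γ : SimpleGraph V) (t : V) : Type := GG Γ ⧸ (par (lk Γ t) : Subgroup (GG Γ))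

/-- Action of `G(Γ)` on the free group on the cosets. -/
noncomputable def act (t : V) : GG Γ →* MulAut (FreeGroup (Cst Γ t)) where
  toFun g := FreeGroup.freeGroupCongr (MulAction.toPerm g)
  map_one' := by
    apply MulEquiv.toMonoidHom_injective
    apply FreeGroup.ext_hom
    intro x
    simp
  map_mul' g h := by
    apply MulEquiv.toMonoidHom_injective
    apply FreeGroup.ext_hom
    intro x
    simp [mul_smul]

theorem act_of (t : V) (g : GG Γ) (x : Cst Γ t) :
    act t g (FreeGroup.of x) = FreeGroup.of (g • x) := by
  simp [act]

theorem reduce_map {α : Type*} [DecidableEq α] (e : α ≃ α) (L : List (α × Bool)) :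
    FreeGroup.reduce (L.map fun p => (e p.1, p.2)) =
      (FreeGroup.reduce L).map fun p => (e p.1, p.2) := by
  induction L with
  | nil => rfl
  | cons a L ih =>
    rw [List.map_cons, FreeGroup.reduce.cons, FreeGroup.reduce.cons, ih]
    rcases h : FreeGroup.reduce L with _ | ⟨b, L'⟩
    · simp
    · simp only [List.map_cons, EmbeddingLike.apply_eq_iff_eq]
      split_ifs <;> simp

theorem toWord_act (t : V) (g : GG Γ) (v : FreeGroup (Cst Γ t)) :
    (act t g v).toWord = v.toWord.map fun p => (g • p.1, p.2) := by
  have : act t g v = FreeGroup.mk (v.toWord.map fun p => (g • p.1, p.2)) := by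
    conv_lhs => rw [← FreeGroup.mk_toWord (x := v)]
    simp [act, FreeGroup.freeGroupCongr, FreeGroup.map.mk]
  rw [this, FreeGroup.toWord_mk]
  have := reduce_map (MulAction.toPerm g : Equiv.Perm (Cst Γ t)) v.toWord
  simp only [MulAction.toPerm_apply] at this
  rw [this, FreeGroup.reduce_toWord]

theorem norm_act (t : V) (g : GG Γ) (v : FreeGroup (Cst Γ t)) :
    (act t g v).norm = v.norm := by
  simp [FreeGroup.norm, toWord_act]

/-- The HNN normal form homomorphism. -/
noncomputable def Psi (t : V) : GG Γ →* FreeGroup (Cst Γ t) ⋊[act t] GG Γ :=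
  liftG (fun s => if s = t then SemidirectProduct.inl (FreeGroup.of (QuotientGroup.mk 1))
      else SemidirectProduct.inr (gen s)) (by
    have key : ∀ u, u ≠ t → ¬ Γ.Adj u t → Commute
        (SemidirectProduct.inl (FreeGroup.of (QuotientGroup.mk 1)) :
          FreeGroup (Cst Γ t) ⋊[act t] GG Γ) (SemidirectProduct.inr (gen u)) := by
      intro u hu hut
      have : (gen u : GG Γ) • (QuotientGroup.mk 1 : Cst Γ t) = QuotientGroup.mk 1 := by
        rw [MulAction.Quotient.smul_mk, QuotientGroup.eq]
        simpa using gen_mem (Γ := Γ) (S := lk Γ t) ⟨hu, hut⟩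
      show _ = _
      ext
      · simp [act_of, this]
      · simp
    intro u v huv h
    split_ifs with h1 h2 h2
    · exact Commute.refl _
    · subst h1; exact key v h2 (fun h' => h h'.symm)
    · subst h2; exact (key u h1 h).symm
    · show _ = _
      rw [← map_mul, ← map_mul, (gen_commute h).eq])

/-- The vertex-coordinate (cocycle). -/
noncomputable def fc (t : V) (g : GG Γ) : FreeGroup (Cst Γ t) := (Psi t g).left

theorem Psi_right (t : V) (g : GG Γ) : (Psi t g).right = pj ({t}ᶜ : Set V) g := by
  have : (SemidirectProduct.rightHom.comp (Psi t)) = (pj ({t}ᶜ : Set V) : GG Γ →* GG Γ) := by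
    apply hom_ext
    intro v
    by_cases h : v = t <;> simp [Psi, pj, h]
  exact DFunLike.congr_fun this g

theorem fc_mul (t : V) (g h : GG Γ) :
    fc t (g * h) = fc t g * act t (pj ({t}ᶜ : Set V) g) (fc t h) := by
  simp [fc, map_mul, Psi_right]

theorem fc_one (t : V) : fc t (1 : GG Γ) = 1 := by simp [fc]

/-- base letter -/
noncomputable def e0 (t : V) : Cst Γ t := QuotientGroup.mk 1

theorem fc_gen (t : V) : fc t (gen t : GG Γ) = FreeGroup.of (e0 t) := by
  simp [fc, Psi, e0]

theorem fc_mem {t : V} {g : GG Γ} (h : g ∈ par ({t}ᶜ : Set V)) : fc t g = 1 := by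
  have : Psi t g = SemidirectProduct.inr g := by
    refine par_induction (p := fun g => Psi t g = SemidirectProduct.inr g) ?_ ?_ ?_ ?_ h
    · simp
    · intro x y hx hy; simp [hx, hy]
    · intro x hx; simp [hx]
    · intro v hv
      have hv : v ≠ t := hv
      simp [Psi, hv]
  simp [fc, this]

/-- Evaluation of words in cosets. -/
noncomputable def theta (t : V) : FreeGroup (Cst Γ t) →* GG Γ :=
  FreeGroup.lift fun c => c.out * gen t * c.out⁻¹

theorem theta_of (t : V) (x : GG Γ) :
    theta t (FreeGroup.of (QuotientGroup.mk x : Cst Γ t)) = x * gen t * x⁻¹ := by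
  obtain ⟨h, hh⟩ := QuotientGroup.mk_out_eq_mul (par (lk Γ t)) x
  simp only [theta, FreeGroup.lift_apply_of]
  rw [hh]
  have := (lk_commute h.2).eq
  rw [mul_inv_rev, mul_assoc x, this]
  group

theorem theta_act (t : V) (g : GG Γ) (v : FreeGroup (Cst Γ t)) :
    theta t (act t g v) = g * theta t v * g⁻¹ := by
  have : (theta t).comp (act t g).toMonoidHom =
      (MulAut.conj g).toMonoidHom.comp (theta (Γ := Γ) t) := by
    apply FreeGroup.ext_hom
    intro x
    induction x using QuotientGroup.induction_on with
    | H x =>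
      simp only [MonoidHom.comp_apply, MulEquiv.toMonoidHom_eq_coe, MonoidHom.coe_coe, act_of,
        MulAction.Quotient.smul_mk, theta_of, MulAut.conj_apply, smul_eq_mul]
      group
  exact DFunLike.congr_fun this v

/-- Inverse to `Psi`. -/
noncomputable def Theta (t : V) : FreeGroup (Cst Γ t) ⋊[act t] GG Γ →* GG Γ :=
  SemidirectProduct.lift (theta t) (MonoidHom.id _) (by
    intro g
    ext v
    simp [act_of, ← theta_act])

theorem Theta_Psi (t : V) (g : GG Γ) : Theta t (Psi t g) = g := by
  have : (Theta t).comp (Psi t) = MonoidHom.id (GG Γ) := by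
    apply hom_ext
    intro v
    by_cases h : v = t
    · subst h
      have h1 : Psi v (gen v : GG Γ) =
        SemidirectProduct.inl (FreeGroup.of (QuotientGroup.mk 1)) := by simp [Psi]
      simp only [MonoidHom.comp_apply, h1, Theta, SemidirectProduct.lift_inl, theta_of]
      simp
    · simp [Psi, h, Theta]
  exact DFunLike.congr_fun this g

theorem decomp (t : V) (g : GG Γ) : theta t (fc t g) * pj ({t}ᶜ : Set V) g = g := by
  conv_rhs => rw [← Theta_Psi t g]
  rw [← Psi_right]
  simp [Theta, fc, SemidirectProduct.lift]

theorem mem_of_fc {t : V} {g : GG Γ} (h : fc t g = 1) : g ∈ par ({t}ᶜ : Set V) := by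
  have := decomp t g
  rw [h, map_one, one_mul] at this
  exact this

/-- Action on vertices of the tree. -/
noncomputable def av (t : V) (g : GG Γ) (v : FreeGroup (Cst Γ t)) : FreeGroup (Cst Γ t) :=
  fc t g * act t (pj ({t}ᶜ : Set V) g) v

theorem av_mul (t : V) (g h : GG Γ) (v : FreeGroup (Cst Γ t)) :
    av t (g * h) v = av t g (av t h v) := by
  simp [av, fc_mul, mul_assoc]

theorem av_one (t : V) (v : FreeGroup (Cst Γ t)) : av t (1 : GG Γ) v = v := by
  simp [av, fc_one]

theorem av_base (t : V) (g : GG Γ) : av t g 1 = fc t g := by simp [av]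

theorem av_mem {t : V} {g : GG Γ} (h : g ∈ par ({t}ᶜ : Set V)) (v : FreeGroup (Cst Γ t)) :
    av t g v = act t g v := by
  rw [av, fc_mem h, one_mul, mem_par.1 h]

theorem smul_e0 {t : V} {k : GG Γ} : k • (e0 t : Cst Γ t) = e0 t ↔ k ∈ par (lk Γ t) := by
  rw [e0, MulAction.Quotient.smul_mk, QuotientGroup.eq]
  simp

theorem smul_mk_eq {t : V} {k x : GG Γ} :
    k • (QuotientGroup.mk x : Cst Γ t) = QuotientGroup.mk x ↔ x⁻¹ * k * x ∈ par (lk Γ t) := by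
  rw [MulAction.Quotient.smul_mk, QuotientGroup.eq, ← inv_mem_iff]
  simp [mul_assoc]

/-- (CT) -/
theorem mem_lk_of_commute {t : V} {k : GG Γ} (hk : k ∈ par ({t}ᶜ : Set V))
    (h : Commute k (gen t)) : k ∈ par (lk Γ t) := by
  have h1 := congrArg (fc t) h.eq
  rw [fc_mul, fc_mul, fc_mem hk, fc_gen, mem_par.1 hk] at h1
  simp only [one_mul, map_one, mul_one, act_of] at h1
  exact smul_e0.1 (FreeGroup.of_injective h1)

theorem act_fixed_letter {t : V} {k : GG Γ} {f : FreeGroup (Cst Γ t)} (h : act t k f = f)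
    {p : Cst Γ t × Bool} (hp : p ∈ f.toWord) : k • p.1 = p.1 := by
  have h1 := congrArg FreeGroup.toWord h
  rw [toWord_act] at h1
  have h2 : ∀ L : List (Cst Γ t × Bool), L.map (fun p => (k • p.1, p.2)) = L →
      ∀ p ∈ L, k • p.1 = p.1 := by
    intro L
    induction L with
    | nil => simp
    | cons a L ih =>
      intro hL p hp
      rw [List.map_cons, List.cons.injEq] at hL
      rcases List.mem_cons.1 hp with rfl | hp
      · exact congrArg Prod.fst hL.1
      · exact ih hL.2 p hp
  exact h2 _ h1 p hp

/-- (ZK) -/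
theorem zk {t : V} {k z : GG Γ} (hk : k ∈ par ({t}ᶜ : Set V)) (h : Commute z k) :
    z ∈ par ({t}ᶜ : Set V) ∨ ∃ x, x⁻¹ * k * x ∈ par (lk Γ t) := by
  have h1 := congrArg (fc t) h.eq
  rw [fc_mul, fc_mul, fc_mem hk, mem_par.1 hk] at h1
  simp only [one_mul, map_one, mul_one] at h1
  by_cases hf : fc t z = 1
  · exact Or.inl (mem_of_fc hf)
  · right
    have hne : (fc t z).toWord ≠ [] := by rwa [Ne, FreeGroup.toWord_eq_nil_iff]
    obtain ⟨p, hp⟩ := List.exists_mem_of_ne_nil _ hne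
    have h2 := act_fixed_letter h1.symm hp
    obtain ⟨x, hx⟩ := QuotientGroup.mk_surjective p.1
    exact ⟨x, smul_mk_eq.1 (by rw [hx]; exact h2)⟩

theorem Psi_of_pj_eq_one {t : V} {g : GG Γ} (h : pj ({t}ᶜ : Set V) g = 1) :
    Psi t g = SemidirectProduct.inl (fc t g) := by
  ext
  · simp [fc]
  · simp [Psi_right, h]

theorem torsion_free [Finite V] {g : GG Γ} {n : ℕ} (hn : n ≠ 0) (h : g ^ n = 1) : g = 1 := by
  have key : ∀ s : Finset V, ∀ g : GG Γ, g ∈ par (s : Set V) → g ^ n = 1 → g = 1 := by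
    intro s
    induction s using Finset.induction_on with
    | empty => intro g hg _; exact par_empty (by simpa using hg)
    | insert a s ha ih =>
      intro g hg hgn
      have h1 : pj ({a}ᶜ : Set V) g = 1 := by
        apply ih
        · refine par_mono ?_ (pj_mem_par hg)
          intro x hx
          simp at hx ⊢
          tauto
        · rw [← map_pow, hgn, map_one]
      have h2 := congrArg (Psi a) hgn
      rw [map_pow, Psi_of_pj_eq_one h1, ← map_pow, map_one] at h2
      rw [← map_one (SemidirectProduct.inl)] at h2
      have h3 : fc a g ^ n = 1 := SemidirectProduct.inl_injective h2
      have h4 : fc a g = 1 := by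
        rw [pow_eq_one_iff_left hn] at h3
        exact h3
      have := decomp a g
      rw [h4, h1] at this
      simpa using this.symm
  have := Fintype.ofFinite V
  exact key Finset.univ g (by simp [mem_par_univ]) h

end B


section C
open scoped Classical

variable {V : Type} {Γ : SimpleGraph V}

/-- `k` has support exactly `S`, and is not conjugate into a smaller parabolic. -/
def Full (S : Set V) (k : GG Γ) : Prop := k ∈ par S ∧ ∀ p, ∀ a ∈ S, p * k * p⁻¹ ∉ par (S \ {a})

theorem Full.subset {S T : Set V} {k : GG Γ} (h : Full S k) {p : GG Γ}
    (hp : p * k * p⁻¹ ∈ par T) : S ⊆ T := by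
  intro a ha
  by_contra haT
  have h1 := pj_mem_par (S := S) hp
  simp only [map_mul, map_inv, mem_par.1 h.1] at h1
  refine h.2 _ a ha (par_mono ?_ h1)
  intro x hx
  refine ⟨hx.1, ?_⟩
  rintro rfl
  exact haT hx.2

theorem Full.subset' {S T : Set V} {k : GG Γ} (h : Full S k) {p : GG Γ}
    (hp : p⁻¹ * k * p ∈ par T) : S ⊆ T := h.subset (p := p⁻¹) (by simpa using hp)

theorem Full.ne_one {S : Set V} {k : GG Γ} (h : Full S k) (hS : S.Nonempty) : k ≠ 1 := by
  rintro rfl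
  have := h.subset (T := ∅) (p := 1) (by simp)
  obtain ⟨x, hx⟩ := hS
  exact this hx

theorem exists_full [Finite V] {D : Set V} {g : GG Γ} (hg : g ∈ par D) :
    ∃ S ⊆ D, ∃ p ∈ par D, ∃ k, Full S k ∧ g = p * k * p⁻¹ := by
  let Q : ℕ → Prop := fun n => ∃ S ⊆ D, S.ncard = n ∧ ∃ p ∈ par D, p⁻¹ * g * p ∈ par S
  have hQ : ∃ n, Q n := ⟨_, D, le_rfl, rfl, 1, one_mem _, by simpa using hg⟩
  obtain ⟨S, hSD, hn, p, hp, hk⟩ := Nat.find_spec hQ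
  refine ⟨S, hSD, p, hp, p⁻¹ * g * p, ⟨hk, ?_⟩, by group⟩
  intro r a ha hr
  have h1 := pj_mem_par (S := D) hr
  have h2 : pj D (p⁻¹ * g * p) = p⁻¹ * g * p := mem_par.1 (par_mono hSD hk)
  rw [map_mul, map_mul, h2, map_inv] at h1
  have h3 : Q ((S \ {a}).ncard) := by
    refine ⟨S \ {a}, Set.sdiff_subset.trans hSD, rfl, p * (pj D r)⁻¹,
      mul_mem hp (inv_mem (pj_mem _ _)), par_mono (Set.inter_subset_right (s := D)) ?_⟩
    convert h1 using 1
    group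
  have h4 := Nat.find_min' hQ h3
  have h5 := Set.ncard_sdiff_singleton_lt_of_mem ha (Set.toFinite S)
  omega

/-- (Z*) -/
theorem Full.centralizer [Finite V] {S : Set V} {k z : GG Γ} (h : Full S k) (hz : Commute z k) :
    z ∈ par (S ∪ perp Γ S) := by
  apply mem_of_forall
  intro t ht
  have htS : t ∉ S := fun h' => ht (Or.inl h')
  have hk : k ∈ par ({t}ᶜ : Set V) := par_mono (by
    intro x hx; simp; rintro rfl; exact htS hx) h.1
  rcases zk hk hz with h1 | ⟨x, hx⟩
  · exact h1
  · exfalso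
    have h2 := h.subset' hx
    apply ht
    right
    intro s hs
    exact h2 hs

theorem Full.split {S A : Set V} {k : GG Γ} (h : Full S k) (hA : A ⊆ S)
    (hB : S \ A ⊆ perp Γ A) :
    k = pj A k * pj (S \ A) k ∧ Full A (pj A k) := by
  have hk : k = pj A k * pj (S \ A) k := by
    rw [← pj_union hB, Set.union_sdiff_cancel hA]; exact (mem_par.1 h.1).symm
  refine ⟨hk, pj_mem _ _, ?_⟩
  intro p a ha hp
  have h1 := pj_mem_par' (S := A) hp
  simp only [map_mul, map_inv, pj_pj, Set.inter_self] at h1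
  have h2 : pj A p * k * (pj A p)⁻¹ ∈ par ((A \ {a}) ∪ (S \ A)) := by
    have h3 : pj A p * k * (pj A p)⁻¹ =
        (pj A p * pj A k * (pj A p)⁻¹) * pj (S \ A) k := by
      conv_lhs => rw [hk]
      have := (par_commute hB (inv_mem (pj_mem A p)) (pj_mem (S \ A) k)).eq
      simp only [mul_assoc]
      rw [this]
    rw [h3]
    exact mul_mem (par_mono Set.subset_union_left h1)
      (par_mono Set.subset_union_right (pj_mem _ _))
  have h3 := h.subset h2 (hA ha)
  rcases h3 with h3 | h3
  · exact h3.2 rfl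
  · exact h3.2 ha

theorem perp_union {A B T : Set V} (h1 : A ⊆ perp Γ T) (h2 : B ⊆ perp Γ T) :
    A ∪ B ⊆ perp Γ T := Set.union_subset h1 h2

theorem Full.commute_split [Finite V] {S A : Set V} {k z : GG Γ} (h : Full S k) (hA : A ⊆ S)
    (hB : S \ A ⊆ perp Γ A) (hz : Commute z k) : Commute z (pj A k) := by
  have h1 := h.centralizer hz
  have h2 : (S \ A) ∪ perp Γ S ⊆ perp Γ A := perp_union hB (perp_anti hA)
  have h3 : z = pj A z * pj ((S \ A) ∪ perp Γ S) z := by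
    rw [← pj_union h2, ← Set.union_assoc, Set.union_sdiff_cancel hA]
    exact (mem_par.1 h1).symm
  rw [h3]
  refine Commute.mul_left ?_ ?_
  · exact hz.map (pj A)
  · exact (par_commute h2 (pj_mem _ _) (pj_mem _ _)).symm

/-- Connected vertex sets. -/
def Conn (Γ : SimpleGraph V) (C : Set V) : Prop :=
  C.Nonempty ∧ ∀ A ⊆ C, A.Nonempty → C \ A ⊆ perp Γ A → A = C

theorem exists_comp [Finite V] {S : Set V} (hS : S.Nonempty) :
    ∃ C ⊆ S, Conn Γ C ∧ S \ C ⊆ perp Γ C := by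
  let Q : ℕ → Prop := fun n => ∃ C ⊆ S, C.ncard = n ∧ C.Nonempty ∧ S \ C ⊆ perp Γ C
  have hQ : ∃ n, Q n := ⟨_, S, le_rfl, rfl, hS, by simp⟩
  obtain ⟨C, hCS, hn, hC, hp⟩ := Nat.find_spec hQ
  refine ⟨C, hCS, ⟨hC, ?_⟩, hp⟩
  intro A hA hAn hCA
  have h3 : Q A.ncard := by
    refine ⟨A, hA.trans hCS, rfl, hAn, ?_⟩
    rintro x ⟨hx, hxA⟩
    by_cases hxC : x ∈ C
    · exact hCA ⟨hxC, hxA⟩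
    · exact perp_anti hA (hp ⟨hx, hxC⟩)
  have h4 := Nat.find_min' hQ h3
  exact Set.eq_of_subset_of_ncard_le hA (by omega) (Set.toFinite _)

/-- Pure elements. -/
def Pure (f : GG Γ) : Prop := ∃ (p k : GG Γ) (C : Set V), f = p * k * p⁻¹ ∧ Full C k ∧ Conn Γ C

theorem Full.factor [Finite V] : ∀ (n : ℕ) (S : Set V) (k : GG Γ), S.ncard = n → Full S k →
    ∃ X : List (GG Γ), k = X.prod ∧ (∀ f ∈ X, Pure f) ∧
      ∀ z, Commute z k → ∀ f ∈ X, Commute z f := by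
  intro n
  induction n using Nat.strong_induction_on with
  | _ n ih =>
    intro S k hn hk
    rcases S.eq_empty_or_nonempty with rfl | hS
    · exact ⟨[], by simpa using par_empty hk.1, by simp, by simp⟩
    obtain ⟨C, hCS, hC, hp⟩ := exists_comp (Γ := Γ) hS
    have hp' : S \ (S \ C) ⊆ perp Γ (S \ C) := by
      rw [Set.sdiff_sdiff_cancel_left hCS]; exact perp_symm hp
    have hlt : (S \ C).ncard < n := by
      rw [← hn]
      obtain ⟨c, hc⟩ := hC.1
      exact Set.ncard_lt_ncard ⟨Set.sdiff_subset, fun h => (h (hCS hc)).2 hc⟩ (Set.toFinite _)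
    obtain ⟨X, hX, hXp, hXz⟩ := ih _ hlt (S \ C) (pj (S \ C) k) rfl
      (hk.split Set.sdiff_subset hp').2
    refine ⟨pj C k :: X, ?_, ?_, ?_⟩
    · rw [List.prod_cons, ← hX]; exact (hk.split hCS hp).1
    · intro f hf
      rcases List.mem_cons.1 hf with rfl | hf
      · exact ⟨1, _, C, by simp, (hk.split hCS hp).2, hC⟩
      · exact hXp f hf
    · intro z hz f hf
      rcases List.mem_cons.1 hf with rfl | hf
      · exact hk.commute_split hCS hp hz
      · exact hXz z (hk.commute_split Set.sdiff_subset hp' hz) f hf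

theorem commute_conj {G : Type*} [Group G] {z p k : G} :
    Commute z (p * k * p⁻¹) ↔ Commute (p⁻¹ * z * p) k := by
  constructor
  · intro h
    have h := h.eq
    show _ = _
    calc p⁻¹ * z * p * k = p⁻¹ * (z * (p * k * p⁻¹)) * p := by group
      _ = k * (p⁻¹ * z * p) := by rw [h]; group
  · intro h
    have h := h.eq
    show _ = _
    calc z * (p * k * p⁻¹) = p * (p⁻¹ * z * p * k) * p⁻¹ := by group
      _ = p * k * p⁻¹ * z := by rw [h]; group

theorem commute_conj_conj {G : Type*} [Group G] {x y p : G} :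
    Commute (p * x * p⁻¹) (p * y * p⁻¹) ↔ Commute x y := by
  rw [commute_conj]
  have : p⁻¹ * (p * x * p⁻¹) * p = x := by group
  rw [this]

theorem exists_factor [Finite V] (g : GG Γ) : ∃ X : List (GG Γ), g = X.prod ∧
    (∀ f ∈ X, Pure f) ∧ ∀ z, Commute z g → ∀ f ∈ X, Commute z f := by
  obtain ⟨S, -, p, -, k, hk, rfl⟩ := exists_full (mem_par_univ g)
  obtain ⟨X, rfl, hXp, hXz⟩ := Full.factor _ S k rfl hk
  refine ⟨X.map (fun f => p * f * p⁻¹), ?_, ?_, ?_⟩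
  · have := map_list_prod (MulAut.conj p) X
    exact this
  · intro f hf
    obtain ⟨f', hf', rfl⟩ := List.mem_map.1 hf
    obtain ⟨q, k, C, rfl, h1, h2⟩ := hXp f' hf'
    exact ⟨p * q, k, C, by group, h1, h2⟩
  · intro z hz f hf
    obtain ⟨f', hf', rfl⟩ := List.mem_map.1 hf
    rw [commute_conj] at hz ⊢
    exact hXz _ hz f' hf'

end C


section D
open scoped Classical commutatorElement

theorem toWord_mul_of_norm {α : Type*} [DecidableEq α] {x y : FreeGroup α}
    (h : x.norm + y.norm ≤ (x * y).norm) : (x * y).toWord = x.toWord ++ y.toWord := by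
  refine (FreeGroup.toWord_mul_sublist x y).eq_of_length_le ?_
  simpa [FreeGroup.norm] using h

theorem toWord_mk_of {α : Type*} [DecidableEq α] {L M : List (α × Bool)} {f : FreeGroup α}
    (h : f.toWord = M) (hL : L <:+: M) : (FreeGroup.mk L).toWord = L := by
  have h1 : FreeGroup.IsReduced f.toWord := FreeGroup.isReduced_toWord
  rw [h] at h1
  rw [FreeGroup.toWord_mk]
  obtain ⟨s, t, hst⟩ := hL
  rw [← hst, FreeGroup.IsReduced, List.isChain_append, List.isChain_append] at h1
  exact FreeGroup.IsReduced.reduce_eq h1.1.2.1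

theorem axis {α : Type*} [DecidableEq α] (σ : MulAut (FreeGroup α)) (e : α → α)
    (hσ : ∀ v, (σ v).toWord = v.toWord.map fun p => (e p.1, p.2)) :
    ∀ (n : ℕ) (u f : FreeGroup α) (O : FreeGroup α → Prop), u.norm = n →
      (∀ v, f.norm ≤ (v⁻¹ * f * σ v).norm) → f ≠ 1 → (u⁻¹ * f * σ u).norm = f.norm →
      (∀ v, O (f * σ v) ↔ O v) → (∀ p, p.toWord <+: f.toWord → O p) → O u := by
  intro n
  have hσn : ∀ v, (σ v).norm = v.norm := fun v => by simp [FreeGroup.norm, hσ]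
  induction n with
  | zero =>
    intro u f O hu _ _ _ _ hO
    rw [FreeGroup.norm_eq_zero] at hu
    subst hu
    exact hO 1 (by simp)
  | succ n ih =>
    intro u f O hu hmin hf hd hT hO
    rcases hw : u.toWord with _ | ⟨a, w⟩
    · simp [FreeGroup.norm, hw] at hu
    have hwn : w.length = n := by simpa [FreeGroup.norm, hw] using hu
    have hu1 : (FreeGroup.mk [a])* FreeGroup.mk w = u := by
      rw [FreeGroup.mul_mk, ← FreeGroup.mk_toWord (x := u), hw]; rfl
    have hw' : (FreeGroup.mk w).toWord = w := toWord_mk_of hw (List.suffix_cons a w).isInfix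
    set A := FreeGroup.mk [a] with hA
    set u' := FreeGroup.mk w with hu'
    have hAw : A.toWord = [a] := by simp [hA, FreeGroup.toWord_mk]
    have hσA : (σ A).toWord = [(e a.1, a.2)] := by rw [hσ, hAw]; rfl
    have hσA' : σ A = FreeGroup.mk [(e a.1, a.2)] := by rw [← hσA, FreeGroup.mk_toWord]
    have hσAn : (σ A).norm = 1 := by simp [FreeGroup.norm, hσA]
    have hAn : A.norm = 1 := by simp [FreeGroup.norm, hAw]
    -- the reduction step
    have step : (A⁻¹ * f * σ A).norm = f.norm →
        (∀ p, p.toWord <+: (A⁻¹ * f * σ A).toWord → O (A * p)) → O u := by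
      intro h1 h2
      rw [← hu1]
      refine ih u' (A⁻¹ * f * σ A) (fun v => O (A * v)) ?_ ?_ ?_ ?_ ?_ h2
      · simp [FreeGroup.norm, hw', hwn]
      · intro v
        rw [h1]
        have := hmin (A * v)
        simpa [mul_assoc] using this
      · intro h
        rw [h, FreeGroup.norm_one] at h1
        exact hf (FreeGroup.norm_eq_zero.1 h1.symm)
      · rw [h1, ← hd, ← hu1]
        simp [mul_assoc]
      · intro v
        rw [← hT (A * v)]
        simp [mul_assoc]
    have hge := hmin A
    rcases hfw : f.toWord with _ | ⟨b, l⟩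
    · exact absurd (FreeGroup.toWord_eq_nil_iff.1 hfw) hf
    have hfn : f.norm = l.length + 1 := by simp [FreeGroup.norm, hfw]
    by_cases hba : b = a
    · subst hba
      have hl : (FreeGroup.mk l).toWord = l := toWord_mk_of hfw (List.suffix_cons b l).isInfix
      have hf1 : f = A * FreeGroup.mk l := by
        rw [hA, FreeGroup.mul_mk, ← FreeGroup.mk_toWord (x := f), hfw]; rfl
      have hf' : A⁻¹ * f * σ A = FreeGroup.mk l * σ A := by rw [hf1]; group
      have hln : (FreeGroup.mk l).norm = l.length := by simp [FreeGroup.norm, hl]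
      rw [hf'] at step hge
      have hle := FreeGroup.norm_mul_le (FreeGroup.mk l) (σ A)
      have hword := toWord_mul_of_norm (x := FreeGroup.mk l) (y := σ A) (by omega)
      refine step (by omega) ?_
      intro p hp
      rw [hword, hl, hσA, List.prefix_concat_iff] at hp
      rcases hp with hp | hp
      · have : A * p = f * σ A := by
          rw [hf1, mul_assoc]
          congr 1
          rw [← FreeGroup.mk_toWord (x := p), hp, hσA', FreeGroup.mul_mk]
        rw [this, hT]
        apply hO
        rw [hAw, hfw]
        simp
      · apply hO
        have h1 : A * p = FreeGroup.mk (b :: p.toWord) := by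
          conv_lhs => rw [← FreeGroup.mk_toWord (x := p), hA, FreeGroup.mul_mk]
          rfl
        have h2 : b :: p.toWord <+: b :: l := by simpa using hp
        rw [h1, toWord_mk_of hfw h2.isInfix, hfw]
        exact h2
    · rcases List.eq_nil_or_concat (b :: l) with h0 | ⟨m, c, hmc⟩
      · simp at h0
      rw [List.concat_eq_append] at hmc
      by_cases hc : c = (e a.1, !a.2)
      · have hm : (FreeGroup.mk m).toWord = m :=
          toWord_mk_of hfw (by rw [hmc]; exact (List.prefix_append _ _).isInfix)
        have hmn : (FreeGroup.mk m).norm = m.length := by simp [FreeGroup.norm, hm]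
        have hml : m.length = l.length := by
          have := congrArg List.length hmc
          simpa using this.symm
        have hcA : FreeGroup.mk [c] = (σ A)⁻¹ := by
          rw [hσA', FreeGroup.inv_mk, hc]; rfl
        have hf1 : f = FreeGroup.mk m * (σ A)⁻¹ := by
          rw [← hcA, FreeGroup.mul_mk, ← hmc, ← hfw, FreeGroup.mk_toWord]
        have hf' : A⁻¹ * f * σ A = A⁻¹ * FreeGroup.mk m := by rw [hf1]; group
        rw [hf'] at step hge
        have hle := FreeGroup.norm_mul_le A⁻¹ (FreeGroup.mk m)
        have hAi : A⁻¹.norm = 1 := by rw [FreeGroup.norm_inv_eq, hAn]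
        have hword := toWord_mul_of_norm (x := A⁻¹) (y := FreeGroup.mk m) (by omega)
        refine step (by omega) ?_
        intro p hp
        have hAiw : A⁻¹.toWord = [(a.1, !a.2)] := by rw [FreeGroup.toWord_inv, hAw]; rfl
        rw [hword, hm, hAiw, List.singleton_append, List.prefix_cons_iff] at hp
        rcases hp with hp | ⟨q, hp, hq⟩
        · rw [FreeGroup.toWord_eq_nil_iff] at hp
          subst hp
          rw [mul_one, ← hT, hf1]
          apply hO
          rw [inv_mul_cancel_right, hm, hfw, hmc]
          simp
        · have h1 : A * p = FreeGroup.mk q := by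
            rw [← FreeGroup.mk_toWord (x := p), hp, ← eq_inv_mul_iff_mul_eq,
              ← FreeGroup.mk_toWord (x := A⁻¹), hAiw, FreeGroup.mul_mk]
            rfl
          rw [h1]
          apply hO
          have h2 : q <+: b :: l := by
            rw [hmc]; exact hq.trans (List.prefix_append _ _)
          rw [toWord_mk_of hfw h2.isInfix, hfw]
          exact h2
      · exfalso
        have hiw : (u⁻¹).toWord = FreeGroup.invRev w ++ [(a.1, !a.2)] := by
          rw [FreeGroup.toWord_inv, hw]
          simp [FreeGroup.invRev]
        have hσw : (σ u).toWord = (e a.1, a.2) :: w.map fun p => (e p.1, p.2) := by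
          rw [hσ, hw]; rfl
        have hred : FreeGroup.IsReduced ((u⁻¹).toWord ++ (f.toWord ++ (σ u).toWord)) := by
          have r1 : FreeGroup.IsReduced (u⁻¹).toWord := FreeGroup.isReduced_toWord
          have r2 : FreeGroup.IsReduced f.toWord := FreeGroup.isReduced_toWord
          have r3 : FreeGroup.IsReduced (σ u).toWord := FreeGroup.isReduced_toWord
          unfold FreeGroup.IsReduced at *
          rw [List.isChain_append, List.isChain_append]
          refine ⟨r1, ⟨r2, r3, ?_⟩, ?_⟩
          · intro x hx y hy
            rw [hfw, hmc] at hx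
            rw [hσw] at hy
            simp at hx hy
            subst hx hy
            intro h
            by_contra h'
            apply hc
            ext
            · exact h
            · revert h'
              simp only
              cases c.2 <;> cases a.2 <;> simp
          · intro x hx y hy
            rw [hiw] at hx
            rw [hfw] at hy
            simp at hx hy
            subst hx hy
            intro h
            by_contra h'
            apply hba
            ext
            · exact h.symm
            · revert h'
              simp only
              cases b.2 <;> cases a.2 <;> simp
        have hword : (u⁻¹ * f * σ u).toWord = (u⁻¹).toWord ++ (f.toWord ++ (σ u).toWord) := by
          rw [← hred.reduce_eq, ← FreeGroup.toWord_mk]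
          congr 1
          rw [← FreeGroup.mul_mk, ← FreeGroup.mul_mk, FreeGroup.mk_toWord, FreeGroup.mk_toWord,
            FreeGroup.mk_toWord, mul_assoc]
        have h1 : (u⁻¹ * f * σ u).norm = u⁻¹.norm + (f.norm + (σ u).norm) := by
          simp [FreeGroup.norm, hword]
        rw [hd, FreeGroup.norm_inv_eq, hσn] at h1
        omega

variable {V : Type} {Γ : SimpleGraph V}

theorem conj_of_fixed {t : V} {k : GG Γ} {v : FreeGroup (Cst Γ t)} (h : av t k v = v) :
    (theta t v)⁻¹ * k * theta t v ∈ par ({t}ᶜ : Set V) := by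
  have h1 : (theta t v)⁻¹ * k * theta t v = pj ({t}ᶜ : Set V) k := by
    have h2 := congrArg (theta t) h
    rw [av, map_mul, theta_act] at h2
    have h3 := decomp t k
    calc (theta t v)⁻¹ * k * theta t v
        = (theta t v)⁻¹ * (theta t (fc t k) * pj ({t}ᶜ : Set V) k) * theta t v := by rw [h3]
      _ = (theta t v)⁻¹ * (theta t (fc t k) *
          (pj ({t}ᶜ : Set V) k * theta t v * (pj ({t}ᶜ : Set V) k)⁻¹)) *
            pj ({t}ᶜ : Set V) k := by group
      _ = _ := by rw [h2]; group
  rw [h1]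
  exact pj_mem _ _

/-- finitely many orbits on the axis -/
theorem orbits {t : V} {k : GG Γ} (hk : ∀ v, av t k v ≠ v) :
    ∃ (v0 : FreeGroup (Cst Γ t)) (E : Set (FreeGroup (Cst Γ t))), E.Finite ∧
      ∀ y, Commute y k → ∃ n : ℤ, ∃ x ∈ E, av t y v0 = av t (k ^ n) x := by
  let d : FreeGroup (Cst Γ t) → ℕ := fun v => (v⁻¹ * av t k v).norm
  obtain ⟨v0, hv0⟩ : ∃ v0, ∀ v, d v0 ≤ d v := by
    have hQ : ∃ n, ∃ v, d v = n := ⟨_, 1, rfl⟩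
    obtain ⟨v0, h⟩ := Nat.find_spec hQ
    exact ⟨v0, fun v => by rw [h]; exact Nat.find_min' hQ ⟨v, rfl⟩⟩
  set f0 := v0⁻¹ * av t k v0 with hf0
  set q := pj ({t}ᶜ : Set V) k with hq
  have hdv : ∀ u, (v0 * u)⁻¹ * av t k (v0 * u) = u⁻¹ * f0 * act t q u := by
    intro u
    simp only [hf0, av, ← hq, map_mul]
    group
  have hT : ∀ u, v0 * (f0 * act t q u) = av t k (v0 * u) := by
    intro u
    simp only [hf0, av, ← hq, map_mul]
    group
  refine ⟨v0, (fun p => v0 * p) '' {p | p.toWord <+: f0.toWord}, ?_, ?_⟩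
  · apply Set.Finite.image
    apply Set.Finite.of_finite_image (f := FreeGroup.toWord)
    · refine Set.Finite.subset (f0.toWord.inits.toFinset.finite_toSet) ?_
      rintro _ ⟨p, hp, rfl⟩
      simpa using hp
    · exact FreeGroup.toWord_injective.injOn
  · intro y hy
    have key : ∀ u, d (v0 * u) = d v0 → ∃ n : ℤ, ∃ p : FreeGroup (Cst Γ t),
        p.toWord <+: f0.toWord ∧ v0 * u = av t (k ^ n) (v0 * p) := by
      intro u hu
      refine axis (act t q) (fun x => q • x) (toWord_act t q) _ u f0
        (fun u => ∃ n : ℤ, ∃ p : FreeGroup (Cst Γ t),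
        p.toWord <+: f0.toWord ∧ v0 * u = av t (k ^ n) (v0 * p)) rfl ?_ ?_ ?_ ?_ ?_
      · intro v
        rw [← hdv]
        exact hv0 _
      · intro h
        rw [hf0, inv_mul_eq_one] at h
        exact hk v0 h.symm
      · rw [← hdv]; exact hu
      · intro v
        constructor
        · rintro ⟨n, p, hp, h⟩
          refine ⟨-1 + n, p, hp, ?_⟩
          rw [zpow_add, av_mul, ← h, hT, ← av_mul]
          simp [av_one]
        · rintro ⟨n, p, hp, h⟩
          refine ⟨1 + n, p, hp, ?_⟩
          rw [hT, h, zpow_add, av_mul, zpow_one]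
      · intro p hp
        exact ⟨0, p, hp, by simp [av_one]⟩
    obtain ⟨n, p, hp, h⟩ := key (v0⁻¹ * av t y v0) (by
      rw [mul_inv_cancel_left]
      show ((av t y v0)⁻¹ * av t k (av t y v0)).norm = (v0⁻¹ * av t k v0).norm
      rw [← av_mul, ← hy.eq, av_mul, ← norm_act t (pj ({t}ᶜ : Set V) y) (v0⁻¹ * av t k v0)]
      congr 1
      conv_lhs => rw [av, av]
      simp only [map_mul, map_inv]
      group)
    exact ⟨n, v0 * p, ⟨p, hp, rfl⟩, by rw [← h, mul_inv_cancel_left]⟩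

theorem Full.free [Finite V] {C : Set V} {k y : GG Γ} (hk : Full C k) (hC : Conn Γ C)
    (hy : y ∈ par C) (hyk : Commute y k) {t : V} (ht : t ∈ C) (v : FreeGroup (Cst Γ t))
    (hv : av t y v = v) : y = 1 := by
  by_contra hy1
  obtain ⟨S, hSC, p, hp, k', hk', rfl⟩ := exists_full hy
  have h1 : p⁻¹ * k * p ∈ par (S ∪ perp Γ S) := hk'.centralizer (commute_conj.1 hyk.symm)
  have h2 := hk.subset' h1
  have hS : S.Nonempty := by
    rw [Set.nonempty_iff_ne_empty]
    rintro rfl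
    apply hy1
    rw [par_empty hk'.1]
    simp
  have h3 : S = C := by
    apply hC.2 S hSC hS
    rintro x ⟨hx, hxS⟩
    exact (h2 hx).resolve_left hxS
  subst h3
  have h4 := conj_of_fixed hv
  have h5 := hk'.subset (T := ({t}ᶜ : Set V)) (p := (theta t v)⁻¹ * p) (by
    convert h4 using 1; group)
  exact h5 ht rfl

/-- (PH1) -/
theorem Full.commensurable [Finite V] {C : Set V} {k y : GG Γ} (hk : Full C k) (hC : Conn Γ C)
    (hy : y ∈ par C) (hyk : Commute y k) : ∃ (m : ℕ) (l : ℤ), m ≠ 0 ∧ y ^ m = k ^ l := by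
  obtain ⟨t, ht⟩ := hC.1
  have hk1 : ∀ v, av t k v ≠ v := fun v hv =>
    hk.ne_one hC.1 (hk.free hC hk.1 (Commute.refl _) ht v hv)
  obtain ⟨v0, E, hE, h⟩ := orbits hk1
  choose n x hx hn using fun i : ℕ => h (y ^ i) (hyk.pow_left i)
  have : ∃ i j : ℕ, i < j ∧ x i = x j := by
    by_contra hcon
    push Not at hcon
    have hinj : Function.Injective (fun i => (⟨x i, hx i⟩ : E)) := by
      intro i j hij
      have hij' : x i = x j := congrArg Subtype.val hij
      rcases lt_trichotomy i j with hlt | heq | hlt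
      · exact absurd hij' (hcon i j hlt)
      · exact heq
      · exact absurd hij'.symm (hcon j i hlt)
    have := hE.to_subtype
    exact not_injective_infinite_finite _ hinj
  obtain ⟨i, j, hij, hxij⟩ := this
  have hfix : av t (y ^ (j - i) * k ^ (n i - n j)) v0 = v0 := by
    have e1 : av t (k ^ (- n i)) (av t (y ^ i) v0) = x i := by
      rw [hn, ← av_mul, ← zpow_add]; simp [av_one]
    have e2 : av t (k ^ (- n j)) (av t (y ^ j) v0) = x j := by
      rw [hn, ← av_mul, ← zpow_add]; simp [av_one]
    rw [← hxij, ← e1, ← av_mul, ← av_mul] at e2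
    have e3 := congrArg (av t (k ^ (- n i) * y ^ i)⁻¹) e2
    rw [← av_mul, ← av_mul, inv_mul_cancel, av_one] at e3
    convert e3 using 2
    have c1 : Commute (y ^ (j-i)) (k ^ (n i - n j)) := (hyk.pow_left _).zpow_right _
    have c2 : Commute (y ^ i) (k ^ (n i - n j)) := (hyk.pow_left _).zpow_right _
    have hj : y ^ j = y ^ i * y ^ (j - i) := by rw [← pow_add]; congr 1; omega
    rw [hj, c1.eq, mul_inv_rev]
    have : (k ^ (-n i))⁻¹ * k ^ (-n j) = k ^ (n i - n j) := by
      rw [← zpow_neg, ← zpow_add]; congr 1; ring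
    calc k ^ (n i - n j) * y ^ (j - i)
        = (y ^ i)⁻¹ * (y ^ i * k ^ (n i - n j)) * y ^ (j - i) := by group
      _ = (y ^ i)⁻¹ * (k ^ (n i - n j) * y ^ i) * y ^ (j - i) := by rw [c2.eq]
      _ = _ := by rw [← this]; group
  have h1 := hk.free hC (mul_mem (pow_mem hy _) (zpow_mem hk.1 _))
    ((hyk.pow_left _).mul_left ((Commute.refl k).zpow_left _)) ht v0 hfix
  refine ⟨j - i, -(n i - n j), by omega, ?_⟩
  rw [zpow_neg]
  exact eq_inv_of_mul_eq_one_left h1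

theorem comm_central {G : Type*} [Group G] {z w c d : G} (h1 : Commute z c) (h2 : Commute z d)
    (h3 : Commute w c) (h4 : Commute w d) (h5 : Commute c d) : ⁅z, w⁆ = ⁅c * z, d * w⁆ := by
  rw [commutatorElement_def, commutatorElement_def]
  have e1 : c * z * (d * w) = c * d * (z * w) := by
    calc _ = c * (z * d) * w := by group
      _ = _ := by rw [h2.eq]; group
  have e2 : d * w * (c * z) = c * d * (w * z) := by
    calc _ = d * (w * c) * z := by group
      _ = d * c * (w * z) := by rw [h3.eq]; group
      _ = _ := by rw [h5.eq]
  have hz : Commute z (c * d) := h1.mul_right h2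
  have hw : Commute w (c * d) := h3.mul_right h4
  have c4 : Commute ((z * w) * (w * z)⁻¹) (c * d) :=
    (hz.mul_left hw).mul_left (hw.mul_left hz).inv_left
  calc z * w * z⁻¹ * w⁻¹ = (z * w) * (w * z)⁻¹ * (c * d) * (c * d)⁻¹ := by group
    _ = (c * d * (z * w)) * (c * d * (w * z))⁻¹ := by rw [c4.eq]; group
    _ = _ := by rw [← e1, ← e2]; group

/-- (PH2) -/
theorem Full.abelian [Finite V] {C : Set V} {k : GG Γ} (hk : Full C k) (hC : Conn Γ C)
    {y y' : GG Γ} (hy : y ∈ par C) (hyk : Commute y k) (hy' : y' ∈ par C) (hyk' : Commute y' k) :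
    Commute y y' := by
  obtain ⟨t, ht⟩ := hC.1
  have hk1 : ∀ v, av t k v ≠ v := fun v hv =>
    hk.ne_one hC.1 (hk.free hC hk.1 (Commute.refl _) ht v hv)
  obtain ⟨v0, E, hE, h⟩ := orbits hk1
  obtain ⟨H, hH⟩ : ∃ H : Subgroup (GG Γ), ∀ z, z ∈ H ↔ z ∈ par C ∧ Commute z k := by
    refine ⟨par C ⊓ Subgroup.centralizer {k}, ?_⟩
    intro z
    simp only [Subgroup.mem_inf, Subgroup.mem_centralizer_singleton_iff]
    exact ⟨fun h => ⟨h.1, h.2⟩, fun h => ⟨h.1, h.2⟩⟩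
  choose n x hx hn using fun z : H => h z ((hH z).1 z.2).2
  have hquot : ∀ z w : H, x z = x w → ∃ m : ℤ, (w : GG Γ) = k ^ m * (z : GG Γ) := by
    intro z w hzw
    have c1 := ((hH z).1 z.2).2
    have c2 := ((hH w).1 w.2).2
    have hfix : av t ((z:GG Γ)⁻¹ * (k ^ (n z - n w) * (w : GG Γ))) v0 = v0 := by
      rw [av_mul, av_mul, hn w, ← hzw, ← av_mul t (k ^ (n z - n w)), ← zpow_add, sub_add_cancel, ← hn z, ← av_mul,
        inv_mul_cancel, av_one]
    have h1 := hk.free hC (mul_mem (inv_mem ((hH z).1 z.2).1)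
      (mul_mem (zpow_mem hk.1 _) ((hH w).1 w.2).1))
      (c1.inv_left.mul_left (((Commute.refl k).zpow_left _).mul_left c2)) ht v0 hfix
    refine ⟨-(n z - n w), ?_⟩
    rw [inv_mul_eq_one] at h1
    rw [h1, ← mul_assoc, ← zpow_add]
    simp
  have hcomm : ∀ z z' w w' : H, x z = x z' → x w = x w' → ⁅(z : GG Γ), (w : GG Γ)⁆ = ⁅(z' : GG Γ), (w': GG Γ)⁆ := by
    intro z z' w w' h1 h2
    obtain ⟨m, hm⟩ := hquot z z' h1
    obtain ⟨l, hl⟩ := hquot w w' h2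
    have c1 : ∀ i : ℤ, Commute (z : GG Γ) (k ^ i) := fun i => ((hH z).1 z.2).2.zpow_right i
    have c2 : ∀ i : ℤ, Commute (w : GG Γ) (k ^ i) := fun i => ((hH w).1 w.2).2.zpow_right i
    have c3 : Commute (k ^ m) (k ^ l) := ((Commute.refl k).zpow_left _).zpow_right _
    rw [hm, hl]
    exact comm_central (c1 m) (c1 l) (c2 m) (c2 l) c3
  have hfin : Finite (commutatorSet H) := by
    have := hE.to_subtype
    let F : commutatorSet H → E × E := fun c =>
      (⟨x c.2.choose, hx _⟩, ⟨x c.2.choose_spec.choose, hx _⟩)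
    apply Finite.of_injective F
    intro c c' hcc
    have h1 := congrArg (fun p => (p.1 : FreeGroup (Cst Γ t))) hcc
    have h2 := congrArg (fun p => (p.2 : FreeGroup (Cst Γ t))) hcc
    have h3 := hcomm _ _ _ _ h1 h2
    have s1 := c.2.choose_spec.choose_spec
    have s2 := c'.2.choose_spec.choose_spec
    apply Subtype.ext
    rw [← s1, ← s2]
    apply Subtype.ext
    exact h3
  have hfin2 : Finite (commutator H) := inferInstance
  let a : H := ⟨y, (hH y).2 ⟨hy, hyk⟩⟩
  let b : H := ⟨y', (hH y').2 ⟨hy', hyk'⟩⟩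
  have hab : ⁅a, b⁆ ∈ commutator H := Subgroup.commutator_mem_commutator trivial trivial
  obtain ⟨N, hN, hpow⟩ := (isOfFinOrder_of_finite (⟨_, hab⟩ : commutator H)).exists_pow_eq_one
  have h1 : ⁅a, b⁆ ^ N = 1 := congrArg Subtype.val hpow
  have h2 : ⁅y, y'⁆ ^ N = 1 := congrArg Subtype.val h1
  have h3 := torsion_free hN.ne' h2
  exact commutatorElement_eq_one_iff_commute.1 h3

end D


section E
open scoped Classical

variable {V : Type} {Γ : SimpleGraph V}

/-- (NT) -/
theorem nt [Finite V] {I : Set V} (hI : Conn Γ I) {x w : GG Γ} (hx : x ∈ par I) (hw : w ∈ par I)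
    (hx1 : x ≠ 1) (hw1 : w ≠ 1) (h : ∀ g ∈ par I, Commute (g * x * g⁻¹) w) :
    ∃ (m : ℕ) (l : ℤ), m ≠ 0 ∧ x ^ m = w ^ l := by
  obtain ⟨S, hSI, p, hp, k, hk, rfl⟩ := exists_full hw
  have hS : S.Nonempty := by
    rw [Set.nonempty_iff_ne_empty]
    rintro rfl
    apply hw1
    rw [par_empty hk.1]
    simp
  have hc : ∀ g ∈ par I, Commute (g * x * g⁻¹) k := by
    intro g hg
    have := commute_conj.1 (h (p * g) (mul_mem hp hg))
    convert this using 1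
    group
  have hmem : ∀ g ∈ par I, g * x * g⁻¹ ∈ par (S ∪ perp Γ S) := fun g hg =>
    hk.centralizer (hc g hg)
  let T : Set V := {t | t ∈ I ∧ ∀ g ∈ par I, g * x * g⁻¹ ∈ par ({t}ᶜ : Set V)}
  have hTI : T ⊆ I := fun t ht => ht.1
  have hT : ¬ T.Nonempty := by
    intro hTn
    have hTeq := hI.2 T hTI hTn (by
      rintro s ⟨hsI, hsT⟩ t ht
      refine ⟨fun h => hsT (h ▸ ht), fun hadj => hsT ⟨hsI, ?_⟩⟩
      intro g hg
      have h1 := ht.2 g hg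
      have h2 := ht.2 (gen t * g) (mul_mem (gen_mem ht.1) hg)
      have h3 : gen t * (g * x * g⁻¹) * (gen t)⁻¹ = g * x * g⁻¹ := by
        rw [mem_par] at h1 h2
        have e : gen t * g * x * (gen t * g)⁻¹ = gen t * (g * x * g⁻¹) * (gen t)⁻¹ := by group
        rw [e, map_mul, map_mul, h1, pj_gen_notMem (by simp), map_inv,
          pj_gen_notMem (by simp)] at h2
        simpa using h2.symm
      have h4 : Commute (g * x * g⁻¹) (gen t) := by
        rw [mul_inv_eq_iff_eq_mul] at h3
        exact h3.symm
      refine par_mono ?_ (mem_lk_of_commute h1 h4)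
      intro y hy
      simp only [Set.mem_compl_iff, Set.mem_singleton_iff]
      rintro rfl
      exact hy.2 hadj.symm)
    apply hx1
    apply par_empty
    apply mem_of_forall
    intro t _
    by_cases ht : t ∈ I
    · rw [← hTeq] at ht
      have := ht.2 1 (one_mem _)
      simpa using this
    · refine par_mono ?_ hx
      intro y hy
      simp only [Set.mem_compl_iff, Set.mem_singleton_iff]
      rintro rfl
      exact ht hy
  have hsub : I ⊆ S ∪ perp Γ S := by
    intro t ht
    by_contra hts
    apply hT
    refine ⟨t, ht, fun g hg => par_mono ?_ (hmem g hg)⟩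
    intro y hy
    simp only [Set.mem_compl_iff, Set.mem_singleton_iff]
    rintro rfl
    exact hts hy
  have hSeq := hI.2 S hSI hS (by
    rintro s ⟨hs, hsS⟩
    exact (hsub hs).resolve_left hsS)
  subst hSeq
  obtain ⟨m, l, hm, hml⟩ := hk.commensurable hI (y := p⁻¹ * x * p)
    (mul_mem (mul_mem (inv_mem hp) hx) hp) (by
      have := hc p⁻¹ (inv_mem hp)
      simpa using this)
  refine ⟨m, l, hm, ?_⟩
  rw [conj_zpow, ← hml]
  have : p⁻¹ * x * p = p⁻¹ * x * (p⁻¹)⁻¹ := by simp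
  rw [this, conj_pow]
  group

theorem zpow_eq_one_of [Finite V] {g : GG Γ} {n : ℤ} (hn : n ≠ 0) (h : g ^ n = 1) : g = 1 := by
  apply torsion_free (n := n.natAbs) (by simpa using hn)
  rcases Int.natAbs_eq n with h' | h'
  · rw [h', zpow_natCast] at h; exact h
  · rw [h', zpow_neg, zpow_natCast, inv_eq_one] at h; exact h

theorem center_trivial [Finite V] {I : Set V} (hI : Conn Γ I) {a b : V} (ha : a ∈ I) (hb : b ∈ I)
    (hab : a ≠ b) {z : GG Γ} (hz : z ∈ par I) (h : ∀ g ∈ par I, Commute g z) : z = 1 := by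
  by_contra hz1
  obtain ⟨m, l, hm, h1⟩ := nt hI (gen_mem ha) hz (gen_ne_one a) hz1
    (fun g hg => h _ (mul_mem (mul_mem hg (gen_mem ha)) (inv_mem hg)))
  obtain ⟨m', l', hm', h2⟩ := nt hI (gen_mem hb) hz (gen_ne_one b) hz1
    (fun g hg => h _ (mul_mem (mul_mem hg (gen_mem hb)) (inv_mem hg)))
  have hl' : l' ≠ 0 := by
    rintro rfl
    rw [zpow_zero] at h2
    exact gen_ne_one b (torsion_free hm' h2)
  have h3 : (gen a : GG Γ) ^ ((m : ℤ) * l') = gen b ^ ((m' : ℤ) * l) := by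
    rw [zpow_mul, zpow_mul, zpow_natCast, zpow_natCast, h1, h2, ← zpow_mul, ← zpow_mul, mul_comm]
  have h4 := congrArg (pj {a}) h3
  rw [map_zpow, map_zpow, pj_gen_mem (Set.mem_singleton a),
    pj_gen_notMem (S := {a}) (v := b) (by simpa using hab.symm), one_zpow] at h4
  exact gen_ne_one a (zpow_eq_one_of (mul_ne_zero (by exact_mod_cast hm) hl') h4)

theorem exists_w [Finite V] {I : Set V} (hI : Conn Γ I) {ι H : Type*} [Group H]
    (ψ : ι → (GG Γ →* H)) (s : Finset ι) : ∃ w ∈ par I, w ≠ 1 ∧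
      ∀ i ∈ s, (∃ x ∈ par I, x ≠ 1 ∧ ψ i x = 1) → ψ i w = 1 := by
  induction s using Finset.induction_on with
  | empty =>
    obtain ⟨a, ha⟩ := hI.1
    exact ⟨gen a, gen_mem ha, gen_ne_one a, by simp⟩
  | insert j s hj ih =>
    obtain ⟨w, hw, hw1, hws⟩ := ih
    by_cases hx : ∃ x ∈ par I, x ≠ 1 ∧ ψ j x = 1
    swap
    · refine ⟨w, hw, hw1, ?_⟩
      intro i hi h
      rcases Finset.mem_insert.1 hi with rfl | hi
      · exact absurd h hx
      · exact hws i hi h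
    obtain ⟨x, hxI, hx1, hxj⟩ := hx
    by_cases hc : ∀ g ∈ par I, Commute (g * x * g⁻¹) w
    · obtain ⟨m, l, hm, hml⟩ := nt hI hxI hw hx1 hw1 hc
      refine ⟨x ^ m, pow_mem hxI _, fun h => hx1 (torsion_free hm h), ?_⟩
      intro i hi h
      rcases Finset.mem_insert.1 hi with rfl | hi
      · rw [map_pow, hxj, one_pow]
      · rw [hml, map_zpow, hws i hi h, one_zpow]
    · push Not at hc
      obtain ⟨g, hg, hgc⟩ := hc
      refine ⟨g * x * g⁻¹ * w * (g * x * g⁻¹)⁻¹ * w⁻¹, ?_, ?_, ?_⟩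
      · have : g * x * g⁻¹ ∈ par I := mul_mem (mul_mem hg hxI) (inv_mem hg)
        exact mul_mem (mul_mem (mul_mem this hw) (inv_mem this)) (inv_mem hw)
      · intro h
        rw [mul_inv_eq_one, mul_inv_eq_iff_eq_mul] at h
        exact hgc h
      · intro i hi h
        rcases Finset.mem_insert.1 hi with rfl | hi
        · simp [hxj]
        · simp [hws i hi h]

end E

section F
open scoped Classical

variable {V W : Type} {Λ : SimpleGraph V} {Γ : SimpleGraph W}

/-- Splitting off an element lying in `par (S ∪ perp S)` with trivial `C`-part. -/
theorem mem_rest {S C D : Set W} (hCS : C ⊆ S) (hp : S \ C ⊆ perp Γ C) {z : GG Γ}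
    (hz : z ∈ par (S ∪ perp Γ S)) (hzD : z ∈ par D) (h1 : pj C z = 1) :
    z ∈ par (D ∩ ((S \ C) ∪ perp Γ S)) := by
  apply par_inter hzD
  have h2 : (S \ C) ∪ perp Γ S ⊆ perp Γ C := perp_union hp (perp_anti hCS)
  have h3 : z = pj C z * pj ((S \ C) ∪ perp Γ S) z := by
    rw [← pj_union h2, ← Set.union_assoc, Set.union_sdiff_cancel hCS]
    exact (mem_par.1 hz).symm
  rw [h3, h1, one_mul]
  exact pj_mem _ _

theorem sep [Finite V] [Finite W] {I U : Set V} {D : Set W} (φ : GG Λ →* GG Γ) (hI : Conn Λ I)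
    (hU : U ⊆ perp Λ I) {a b : V} (ha : a ∈ I) (hb : b ∈ I) (hab : a ≠ b)
    (hD : ∀ x ∈ par (I ∪ U), φ x ∈ par D) (hinj : ∀ x ∈ par (I ∪ U), φ x = 1 → x = 1) :
    ∃ (φ' : GG Λ →* GG Γ) (C D' : Set W), C ⊆ D ∧ D' ⊆ D ∧ Conn Γ C ∧ D' ⊆ perp Γ C ∧
      (∀ x ∈ par I, pj C (φ' x) = 1 → x = 1) ∧
      (∀ y ∈ par U, φ' y ∈ par D') ∧ (∀ y ∈ par U, φ' y = 1 → y = 1) := by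
  have := Fintype.ofFinite (Set W)
  obtain ⟨w, hw, hw1, hww⟩ := exists_w hI (fun C : Set W => (pj C).comp φ) Finset.univ
  have hIU : ∀ x, x ∈ par I → x ∈ (par (I ∪ U) : Subgroup (GG Λ)) :=
    fun x hx => par_mono Set.subset_union_left hx
  have hUU : ∀ x, x ∈ par U → x ∈ (par (I ∪ U) : Subgroup (GG Λ)) :=
    fun x hx => par_mono Set.subset_union_right hx
  obtain ⟨S, hSD, p, hp, k, hk, hφw⟩ := exists_full (hD w (hIU w hw))
  have hS : S.Nonempty := by
    rw [Set.nonempty_iff_ne_empty]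
    rintro rfl
    apply hw1
    apply hinj w (hIU w hw)
    rw [hφw, par_empty hk.1]
    simp
  obtain ⟨C, hCS, hC, hCp⟩ := exists_comp (Γ := Γ) hS
  have hkC := (hk.split hCS hCp).2
  obtain ⟨φ', hφ'⟩ : ∃ φ' : GG Λ →* GG Γ, ∀ x, φ' x = p⁻¹ * φ x * p :=
    ⟨(MulAut.conj p⁻¹).toMonoidHom.comp φ, fun x => by simp⟩
  have hφ'w : φ' w = k := by rw [hφ', hφw]; group
  have hφ'1 : ∀ x, φ' x = 1 → φ x = 1 := by
    intro x hx
    rw [hφ'] at hx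
    have : φ x = p * (p⁻¹ * φ x * p) * p⁻¹ := by group
    rw [this, hx]; simp
  have hinjC : ∀ x ∈ par I, pj C (φ' x) = 1 → x = 1 := by
    intro x hx hx1
    by_contra hne
    have hpc : pj C (φ x) = 1 := by
      have e : φ x = p * φ' x * p⁻¹ := by rw [hφ']; group
      rw [e, map_mul, map_mul, hx1, map_inv]; simp
    have h1 : pj C (φ w) = 1 := hww C (Finset.mem_univ _) ⟨x, hx, hne, hpc⟩
    have h2 : pj C k = 1 := by
      rw [← hφ'w, hφ', map_mul, map_mul, h1, map_inv]; simp
    exact hkC.ne_one hC.1 h2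
  have hcomm : ∀ x ∈ par I, ∀ y ∈ par U, Commute (φ' x) (φ' y) := by
    intro x hx y hy
    exact (par_commute hU hx hy).map φ'
  refine ⟨φ', C, D ∩ ((S \ C) ∪ perp Γ S), hCS.trans hSD, Set.inter_subset_left, hC,
    Set.inter_subset_right.trans (perp_union hCp (perp_anti hCS)), hinjC, ?_, ?_⟩
  · intro y hy
    have hyk : Commute (φ' y) k := by rw [← hφ'w]; exact (hcomm w hw y hy).symm
    apply mem_rest hCS hCp (hk.centralizer hyk)
    · rw [hφ']
      exact mul_mem (mul_mem (inv_mem hp) (hD y (hUU y hy))) hp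
    · by_contra hne
      obtain ⟨m, l, hm, hml⟩ := hkC.commensurable hC (pj_mem C (φ' y)) (hyk.map (pj C))
      have h1 : pj C (φ' (w ^ l)) = pj C (φ' y) ^ m := by
        rw [hml, map_zpow, map_zpow, hφ'w]
      have h2 : w ^ l = 1 := by
        apply center_trivial hI ha hb hab (zpow_mem hw l)
        intro g hg
        have h3 : g * w ^ l * g⁻¹ * (w ^ l)⁻¹ = 1 := by
          apply hinjC
          · exact mul_mem (mul_mem (mul_mem hg (zpow_mem hw l)) (inv_mem hg))
              (inv_mem (zpow_mem hw l))
          · have h4 : Commute (pj C (φ' g)) (pj C (φ' (w ^ l))) := by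
              rw [h1]
              exact ((hcomm g hg y hy).map (pj C)).pow_right m
            simp only [map_mul, map_inv]
            rw [h4.eq]
            simp
        rw [mul_inv_eq_one, mul_inv_eq_iff_eq_mul] at h3
        exact h3
      rw [h2, map_one, map_one] at h1
      exact hne (torsion_free hm h1.symm)
  · intro y hy h
    exact hinj y (hUU y hy) (hφ'1 y h)

/-- Induced embedding of `Λ[U]` into `Γ[D]`. -/
def Emb (Λ : SimpleGraph V) (Γ : SimpleGraph W) (U : Set V) (D : Set W) : Prop :=
  ∃ f : V → W, (∀ u ∈ U, f u ∈ D) ∧ ∀ u ∈ U, ∀ v ∈ U, (f u = f v → u = v) ∧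
    (Γ.Adj (f u) (f v) ↔ Λ.Adj u v)

theorem Emb.union {I U : Set V} {C D' D : Set W} (h1 : Emb Λ Γ I C) (h2 : Emb Λ Γ U D')
    (hC : C ⊆ D) (hD' : D' ⊆ D) (hp : D' ⊆ perp Γ C) (hU : U ⊆ perp Λ I) :
    Emb Λ Γ (I ∪ U) D := by
  obtain ⟨f, hf, hf'⟩ := h1
  obtain ⟨g, hg, hg'⟩ := h2
  have hdis : ∀ u ∈ U, u ∉ I := fun u hu hI => (hU hu u hI).1 rfl
  have e1 : ∀ u ∈ I, (if u ∈ I then f u else g u) = f u := fun u hu => if_pos hu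
  have e2 : ∀ u ∈ U, (if u ∈ I then f u else g u) = g u := fun u hu => if_neg (hdis u hu)
  refine ⟨fun u => if u ∈ I then f u else g u, ?_, ?_⟩
  · rintro u (hu | hu)
    · dsimp only; rw [e1 u hu]; exact hC (hf u hu)
    · dsimp only; rw [e2 u hu]; exact hD' (hg u hu)
  · rintro u (hu | hu) v (hv | hv)
    · dsimp only; rw [e1 u hu, e1 v hv]; exact hf' u hu v hv
    · dsimp only; rw [e1 u hu, e2 v hv]
      have h3 := hp (hg v hv) _ (hf u hu)
      have h4 := hU hv u hu
      exact ⟨fun h => absurd h h3.1, fun h => absurd h h3.2, fun h => absurd h h4.2⟩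
    · dsimp only; rw [e2 u hu, e1 v hv]
      have h3 := hp (hg u hu) _ (hf v hv)
      have h4 := hU hu v hv
      exact ⟨fun h => absurd h.symm h3.1, fun h => absurd h.symm h3.2,
        fun h => absurd h.symm h4.2⟩
    · dsimp only; rw [e2 u hu, e2 v hv]; exact hg' u hu v hv

theorem eq_one_of_edgeless [Finite V] {U : Set V} (hU : ∀ a ∈ U, ∀ b ∈ U, ¬ Λ.Adj a b)
    {x : GG Λ} (hx : x ∈ par U) (h : ∀ t ∈ U, pj {t} x = 1) : x = 1 := by
  have key : ∀ s : Finset V, (s : Set V) ⊆ U → pj (s : Set V) x = 1 := by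
    intro s
    induction s using Finset.induction_on with
    | empty => intro _; simp [pj_empty]
    | insert a s ha ih =>
      intro hs
      rw [Finset.coe_insert, Set.insert_subset_iff] at hs
      rw [Finset.coe_insert, Set.insert_eq, pj_union, h a hs.1, ih hs.2, one_mul]
      intro b hb c hc
      rw [Set.mem_singleton_iff] at hc
      subst hc
      exact ⟨fun h => ha (by rw [h]; exact hb), hU c hs.1 b (hs.2 hb)⟩
  have := key (Set.toFinite U).toFinset (by simp)
  rw [Set.Finite.coe_toFinset, mem_par.1 hx] at this
  exact this

theorem edgeless [Finite V] [Finite W] [Nonempty W] : ∀ (n : ℕ) (U : Set V) (D : Set W) (φ : GG Λ →* GG Γ),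
    U.ncard = n → (∀ a ∈ U, ∀ b ∈ U, ¬ Λ.Adj a b) → (∀ x ∈ par U, φ x ∈ par D) →
    (∀ x ∈ par U, φ x = 1 → x = 1) → Emb Λ Γ U D := by
  intro n
  induction n with
  | zero =>
    intro U D φ hn hU hD hinj
    rw [Set.ncard_eq_zero] at hn
    subst hn
    obtain ⟨w⟩ := ‹Nonempty W›
    exact ⟨fun _ => w, by simp, by simp⟩
  | succ n ih =>
    intro U D φ hn hU hD hinj
    obtain ⟨u, hu⟩ : U.Nonempty := by
      rw [Set.nonempty_iff_ne_empty]; rintro rfl; simp at hn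
    have hgu : (gen u : GG Λ) ∈ par U := gen_mem hu
    obtain ⟨S, hSD, p, hp, k, hk, hφu⟩ := exists_full (hD _ hgu)
    have hS : S.Nonempty := by
      rw [Set.nonempty_iff_ne_empty]
      rintro rfl
      apply gen_ne_one u
      apply hinj _ hgu
      rw [hφu, par_empty hk.1]
      simp
    obtain ⟨C, hCS, hC, hCp⟩ := exists_comp (Γ := Γ) hS
    have hkC := (hk.split hCS hCp).2
    obtain ⟨φ', hφ'⟩ : ∃ φ' : GG Λ →* GG Γ, ∀ x, φ' x = p⁻¹ * φ x * p :=
      ⟨(MulAut.conj p⁻¹).toMonoidHom.comp φ, fun x => by simp⟩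
    have hφ'u : φ' (gen u) = k := by rw [hφ', hφu]; group
    have hφ'1 : ∀ x, φ' x = 1 → φ x = 1 := by
      intro x hx
      rw [hφ'] at hx
      have : φ x = p * (p⁻¹ * φ x * p) * p⁻¹ := by group
      rw [this, hx]; simp
    have hyk : ∀ v ∈ U, Commute (φ' (gen v)) k := by
      intro v hv
      rw [← hφ'u]
      exact (gen_commute (hU v hv u hu)).map φ'
    have hch : ∀ v, ∃ (m : ℕ) (l : ℤ), m ≠ 0 ∧ (v ∈ U → pj C (φ' (gen v)) ^ m = (pj C k) ^ l) := by
      intro v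
      by_cases hv : v ∈ U
      · obtain ⟨m, l, hm, hml⟩ := hkC.commensurable hC (pj_mem C (φ' (gen v)))
          ((hyk v hv).map (pj C))
        exact ⟨m, l, hm, fun _ => hml⟩
      · exact ⟨1, 0, by simp, fun h => absurd h hv⟩
    choose m l hm hml using hch
    have hηc : ∀ a b : V, a ≠ b → ¬ Λ.Adj a b →
        Commute (if a ∈ U then gen a ^ m a * (gen u : GG Λ) ^ (- l a) else 1)
          (if b ∈ U then gen b ^ m b * (gen u : GG Λ) ^ (- l b) else 1) := by
      intro a b _ hab
      split_ifs with h1 h2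
      · have c1 : Commute (gen a : GG Λ) (gen b) := gen_commute hab
        have c2 : Commute (gen a : GG Λ) (gen u) := gen_commute (hU a h1 u hu)
        have c3 : Commute (gen u : GG Λ) (gen b) := gen_commute (hU u hu b h2)
        exact ((c1.pow_pow _ _).mul_right ((c2.pow_left _).zpow_right _)).mul_left
          (((c3.pow_right _).zpow_left _).mul_right (((Commute.refl _).zpow_left _).zpow_right _))
      · exact Commute.one_right _
      · exact Commute.one_left _
      · exact Commute.one_left _
    obtain ⟨η, hη⟩ : ∃ η : GG Λ →* GG Λ, ∀ v, η (gen v) =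
        if v ∈ U then gen v ^ m v * (gen u : GG Λ) ^ (- l v) else 1 :=
      ⟨liftG _ hηc, fun v => liftG_gen _ _ v⟩
    have hηU : ∀ x, η x ∈ par U := by
      intro x
      induction x using gg_induction with
      | h1 => simp
      | hm x y hx hy => rw [map_mul]; exact mul_mem hx hy
      | hi x hx => rw [map_inv]; exact inv_mem hx
      | hg v =>
        rw [hη]
        split_ifs with h
        · exact mul_mem (pow_mem (gen_mem h) _) (zpow_mem hgu _)
        · exact one_mem _
    have hηp : ∀ t ∈ U, t ≠ u → ∀ x, pj {t} (η x) = pj {t} (x) ^ m t := by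
      intro t ht htu x
      have hcc : ∀ x y : GG Λ, Commute (pj {t} x) (pj {t} y) := by
        intro x y
        have h1 : Commute (gen t) (pj {t} y) :=
          commute_of_gens (by rintro v rfl; exact Commute.refl _) (pj_mem {t} y)
        exact (commute_of_gens (z := pj {t} y)
          (by rintro v rfl; exact h1.symm) (pj_mem {t} x)).symm
      induction x using gg_induction with
      | h1 => simp
      | hm x y hx hy => rw [map_mul, map_mul, hx, hy, map_mul, (hcc x y).mul_pow]
      | hi x hx => rw [map_inv, map_inv, hx, map_inv, inv_pow]
      | hg v =>
        have eu : pj {t} (gen u : GG Λ) = 1 := pj_gen_notMem (by simpa using htu.symm)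
        by_cases hv : v = t
        · subst hv
          rw [hη, if_pos ht, map_mul, map_pow, map_zpow, eu]
          simp
        · have e : (pj {t} (gen v : GG Λ)) = 1 := pj_gen_notMem (by simpa using hv)
          rw [hη, e]
          split_ifs with h
          · rw [map_mul, map_pow, map_zpow, e, eu]
            simp
          · simp
    have hUn : (U \ {u}).ncard = n := by
      have := Set.ncard_sdiff_singleton_add_one hu (Set.toFinite U)
      omega
    have hsub : ∀ x, x ∈ par (U \ {u}) → x ∈ (par U : Subgroup (GG Λ)) :=
      fun x hx => par_mono Set.sdiff_subset hx
    have hrec := ih (U \ {u}) (D ∩ ((S \ C) ∪ perp Γ S)) (φ'.comp η) hUn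
      (fun a ha b hb => hU a ha.1 b hb.1) (by
        intro x hx
        refine par_induction (p := fun x => (φ'.comp η) x ∈ par (D ∩ ((S \ C) ∪ perp Γ S)))
          ?_ ?_ ?_ ?_ hx
        · rw [map_one]; exact one_mem _
        · intro x y hx hy; rw [map_mul]; exact mul_mem hx hy
        · intro x hx; rw [map_inv]; exact inv_mem hx
        · rintro v ⟨hv, -⟩
          rw [MonoidHom.comp_apply]
          apply mem_rest hCS hCp
          · apply hk.centralizer
            rw [hη, if_pos hv, map_mul, map_pow, map_zpow, hφ'u]
            exact ((hyk v hv).pow_left _).mul_left ((Commute.refl k).zpow_left _)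
          · rw [hφ']
            exact mul_mem (mul_mem (inv_mem hp) (hD _ (hηU _))) hp
          · rw [hη, if_pos hv, map_mul, map_mul, map_pow, map_pow, map_zpow, map_zpow, hφ'u,
              hml v hv, zpow_neg, mul_inv_cancel]) (by
        intro x hx h
        have h1 : η x = 1 := hinj _ (hηU _) (hφ'1 _ h)
        apply eq_one_of_edgeless (U := U \ {u}) (fun a ha b hb => hU a ha.1 b hb.1) hx
        rintro t ⟨ht, htu⟩
        have h2 := hηp t ht htu x
        rw [h1, map_one] at h2
        exact torsion_free (hm t) h2.symm)
    obtain ⟨c, hc⟩ := hC.1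
    have h1 : Emb Λ Γ {u} C := ⟨fun _ => c, fun _ _ => hc, by
      rintro a rfl b rfl
      simp⟩
    have h2 := h1.union (D := D) hrec (hCS.trans hSD) Set.inter_subset_left
      (Set.inter_subset_right.trans (perp_union hCp (perp_anti hCS))) (by
        rintro v ⟨hv, hvu⟩ w hw
        rw [Set.mem_singleton_iff] at hw
        subst hw
        exact ⟨fun h => hvu h.symm, hU w hu v hv⟩)
    have h3 : {u} ∪ U \ {u} = U := Set.union_sdiff_cancel (by simpa using hu)
    rwa [h3] at h2

end F

section G1
open scoped Classical commutatorElement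

variable {V W : Type} {Γ : SimpleGraph V}

/-- Consecutive natural numbers. -/
def cons2 (i j : ℕ) : Prop := i = j + 1 ∨ j = i + 1

theorem cons2_symm {i j : ℕ} : cons2 i j ↔ cons2 j i := by unfold cons2; tauto

/-- Iterated commutator. -/
def icomm {G : Type*} [Group G] (g : ℕ → G) : ℕ → G
  | 0 => g 0
  | k + 1 => ⁅g (k + 1), icomm g k⁆

theorem icomm_map {G H : Type*} [Group G] [Group H] (φ : G →* H) (g : ℕ → G) (k : ℕ) :
    φ (icomm g k) = icomm (fun i => φ (g i)) k := by
  induction k with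
  | zero => rfl
  | succ k ih => simp only [icomm]; rw [map_commutatorElement, ih]

theorem icomm_mem {G : Type*} [Group G] {g : ℕ → G} {H : Subgroup G} {k : ℕ}
    (h : ∀ i ≤ k, g i ∈ H) : icomm g k ∈ H := by
  induction k with
  | zero => exact h 0 le_rfl
  | succ k ih =>
    have h1 := h (k + 1) le_rfl
    have h2 := ih (fun i hi => h i (by omega))
    simp only [icomm, commutatorElement_def]
    exact mul_mem (mul_mem (mul_mem h1 h2) (inv_mem h1)) (inv_mem h2)

theorem icomm_kill {v : ℕ → V} (k : ℕ) :
    pj ({v k}ᶜ : Set V) (icomm (fun i => (gen (v i) : GG Γ)) k) = 1 := by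
  have e : pj ({v k}ᶜ : Set V) (gen (v k) : GG Γ) = 1 := pj_gen_notMem (by simp)
  cases k with
  | zero => exact e
  | succ k => simp only [icomm]; rw [map_commutatorElement, e]; simp

theorem icomm_ne_one {v : ℕ → V} {n : ℕ} (hv : ∀ i < n, ∀ j < n, v i = v j → i = j)
    (ha : ∀ i, i + 1 < n → Γ.Adj (v i) (v (i + 1))) (k : ℕ) (hk : k < n) :
    icomm (fun i => (gen (v i) : GG Γ)) k ≠ 1 := by
  induction k with
  | zero => exact gen_ne_one _
  | succ k ih =>
    intro h
    have ih := ih (by omega)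
    apply ih
    simp only [icomm] at h
    rw [commutatorElement_eq_one_iff_commute] at h
    have h1 : icomm (fun i => (gen (v i) : GG Γ)) k ∈ par ({v (k + 1)}ᶜ : Set V) := by
      apply icomm_mem
      intro i hi
      apply gen_mem
      intro h'
      have := hv _ (by omega) _ (by omega) h'
      omega
    have h2 := mem_lk_of_commute h1 h.symm
    have h3 : icomm (fun i => (gen (v i) : GG Γ)) k ∈ par ({v k}ᶜ : Set V) := by
      refine par_mono ?_ h2
      rintro s ⟨_, hs⟩ rfl
      exact hs (ha k hk)
    rw [← mem_par.1 h3, icomm_kill]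

/-- good factors -/
def Good {G : Type*} [Group G] (X : ℕ → List G) : ℕ → Set G
  | 0 => {f | f ∈ X 0}
  | k + 1 => {f | f ∈ X (k + 1) ∧ ∃ f' ∈ Good X k, ¬ Commute f f'}

theorem Good.mem {G : Type*} [Group G] {X : ℕ → List G} {k : ℕ} {f : G} (h : f ∈ Good X k) :
    f ∈ X k := by
  cases k with
  | zero => exact h
  | succ k => exact h.1

theorem Good.chain {G : Type*} [Group G] {X : ℕ → List G} {k : ℕ} : ∀ {f : G}, f ∈ Good X k →
    ∃ F : ℕ → G, F k = f ∧ (∀ i ≤ k, F i ∈ X i) ∧ ∀ i < k, ¬ Commute (F (i + 1)) (F i) := by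
  induction k with
  | zero =>
    intro f h
    refine ⟨fun _ => f, rfl, ?_, by simp⟩
    intro i hi
    obtain rfl : i = 0 := by omega
    exact h
  | succ k ih =>
    rintro f ⟨h1, f', hf', h2⟩
    obtain ⟨F, hF, hX, hc⟩ := ih hf'
    refine ⟨fun i => if i ≤ k then F i else f, by simp, ?_, ?_⟩
    · intro i hi
      by_cases h : i ≤ k
      · simpa [h] using hX i h
      · obtain rfl : i = k + 1 := by omega
        simpa using h1
    · intro i hi
      by_cases h : i + 1 ≤ k
      · simpa [h, show i ≤ k by omega] using hc i (by omega)
      · obtain rfl : i = k := by omega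
        simpa [hF] using h2

/-- The subgroup generated by good factors up to level `k`. -/
def MG {G : Type*} [Group G] (X : ℕ → List G) (k : ℕ) : Subgroup G :=
  Subgroup.closure {f | ∃ i ≤ k, f ∈ Good X i}

theorem MG_mono {G : Type*} [Group G] (X : ℕ → List G) (k : ℕ) : MG X k ≤ MG X (k + 1) := by
  apply Subgroup.closure_mono
  rintro f ⟨i, hi, h⟩
  exact ⟨i, by omega, h⟩

theorem conj_list {G : Type*} [Group G] (L : List G) (H : Subgroup G)
    (h : ∀ f ∈ L, ∀ m ∈ H, f * m * f⁻¹ ∈ H) : ∀ m ∈ H, L.prod * m * L.prod⁻¹ ∈ H := by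
  induction L with
  | nil => simp
  | cons a L ih =>
    intro m hm
    have h1 := ih (fun f hf => h f (List.mem_cons_of_mem _ hf)) m hm
    have h2 := h a List.mem_cons_self _ h1
    rw [List.prod_cons]
    convert h2 using 1
    group

theorem commute_closure {G : Type*} [Group G] {S : Set G} {f m : G} (h : ∀ s ∈ S, Commute f s)
    (hm : m ∈ Subgroup.closure S) : Commute f m := by
  induction hm using Subgroup.closure_induction with
  | mem x hx => exact h x hx
  | one => exact Commute.one_right _
  | mul x y _ _ hx hy => exact hx.mul_right hy
  | inv x _ hx => exact hx.inv_right

theorem good_nonempty {G : Type*} [Group G] {g : ℕ → G} {X : ℕ → List G} {n : ℕ}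
    (hg : ∀ i < n, g i = (X i).prod)
    (hX : ∀ i < n, ∀ j < n, ¬ cons2 i j → ∀ f ∈ X i, ∀ f' ∈ X j, Commute f f') {k : ℕ} (hk : k < n)
    (hne : icomm g k ≠ 1) : (Good X k).Nonempty := by
  have hM : ∀ k < n, icomm g k ∈ MG X k := by
    intro k
    induction k with
    | zero =>
      intro h
      simp only [icomm]
      rw [hg 0 h]
      apply list_prod_mem
      intro f hf
      exact Subgroup.subset_closure ⟨0, le_rfl, hf⟩
    | succ k ih =>
      intro h
      have ih := MG_mono X k (ih (by omega))
      simp only [icomm, commutatorElement_def]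
      refine mul_mem ?_ (inv_mem ih)
      rw [hg _ h]
      refine conj_list _ _ ?_ _ ih
      intro f hf m hm
      by_cases hgood : f ∈ Good X (k + 1)
      · have : f ∈ MG X (k + 1) := Subgroup.subset_closure ⟨k + 1, le_rfl, hgood⟩
        exact mul_mem (mul_mem this hm) (inv_mem this)
      · have : Commute f m := by
          refine commute_closure ?_ hm
          rintro f' ⟨i, hi, hf'⟩
          by_cases hik : i = k
          · subst hik
            by_contra hc
            exact hgood ⟨hf, f', hf', hc⟩
          · exact hX _ h i (by omega) (by unfold cons2; omega) f hf f' (Good.mem hf')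
        rw [this.eq]
        simpa using hm
  by_contra hemp
  rw [Set.not_nonempty_iff_eq_empty] at hemp
  apply hne
  cases k with
  | zero =>
    have : X 0 = [] := by
      by_contra h
      obtain ⟨f, hf⟩ := List.exists_mem_of_ne_nil _ h
      have : f ∈ Good X 0 := hf
      rw [hemp] at this
      exact this
    simp only [icomm]
    rw [hg 0 hk, this]; rfl
  | succ k =>
    simp only [icomm]
    rw [commutatorElement_eq_one_iff_commute, hg _ hk]
    apply Commute.list_prod_left
    intro f hf
    refine commute_closure ?_ (hM k (by omega))
    rintro f' ⟨i, hi, hf'⟩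
    by_cases hik : i = k
    · subst hik
      by_contra hc
      have : f ∈ Good X (i + 1) := ⟨hf, f', hf', hc⟩
      rw [hemp] at this
      exact this
    · exact hX _ hk i (by omega) (by unfold cons2; omega) f hf f' (Good.mem hf')

/-- A commutation pattern of a path. -/
def Pat {G : Type*} [Group G] (n : ℕ) (x : ℕ → G) : Prop :=
  ∀ i < n, ∀ j < n, Commute (x i) (x j) ↔ ¬ cons2 i j

theorem exists_pure {Λ : SimpleGraph W} [Finite V] {v : ℕ → W} {n : ℕ} (hn : 0 < n)
    (hv : ∀ i < n, ∀ j < n, v i = v j → i = j)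
    (ha : ∀ i < n, ∀ j < n, Λ.Adj (v i) (v j) ↔ cons2 i j) (φ : GG Λ →* GG Γ) {I : Set W}
    (hI : ∀ i < n, v i ∈ I) (hinj : ∀ x ∈ par I, φ x = 1 → x = 1) :
    ∃ F : ℕ → GG Γ, (∀ i < n, Pure (F i)) ∧ Pat n F := by
  choose X hXp hXu hXc using fun i => exists_factor (φ (gen (v i)))
  have hX : ∀ i < n, ∀ j < n, ¬ cons2 i j → ∀ f ∈ X i, ∀ f' ∈ X j, Commute f f' := by
    intro i hi j hj hij f hf f' hf'
    have h1 : Commute (φ (gen (v i))) (φ (gen (v j))) :=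
      (gen_commute (fun h => hij ((ha i hi j hj).1 h))).map φ
    exact (hXc i _ (hXc j _ h1 f' hf').symm f hf).symm
  have hne : icomm (fun i => φ (gen (v i))) (n - 1) ≠ 1 := by
    rw [← icomm_map φ (fun i => gen (v i))]
    intro h
    refine icomm_ne_one (Γ := Λ) hv (fun i hi => (ha i (by omega) _ hi).2 (Or.inr rfl)) (n - 1)
      (by omega) (hinj _ ?_ h)
    exact icomm_mem (fun i hi => gen_mem (hI i (by omega)))
  obtain ⟨f, hf⟩ := good_nonempty (g := fun i => φ (gen (v i))) (fun i _ => hXp i) hX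
    (show n - 1 < n by omega) hne
  obtain ⟨F, -, hF, hc⟩ := Good.chain hf
  refine ⟨F, fun i hi => hXu i _ (hF i (by omega)), ?_⟩
  intro i hi j hj
  constructor
  · rintro h (rfl | rfl)
    · exact hc j (by omega) h
    · exact hc i (by omega) h.symm
  · intro h
    exact hX i hi j hj h _ (hF i (by omega)) _ (hF j (by omega))

end G1

section G2
open scoped Classical

variable {V : Type} {Γ : SimpleGraph V}

theorem perp_self_disj {C : Set V} {x : V} (hx : x ∈ C) : x ∉ perp Γ C := fun h => (h x hx).1 rfl

theorem Conn.subset_or {C C' : Set V} (hC' : Conn Γ C') (h : C' ⊆ C ∪ perp Γ C) :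
    C' ⊆ C ∨ C' ⊆ perp Γ C := by
  by_cases hA : (C' ∩ C).Nonempty
  · left
    have := hC'.2 (C' ∩ C) Set.inter_subset_left hA (by
      rintro x ⟨hx, hx'⟩
      have : x ∈ perp Γ C := (h hx).resolve_left (fun hc => hx' ⟨hx, hc⟩)
      exact perp_anti Set.inter_subset_right this)
    rw [← this]
    exact Set.inter_subset_right
  · right
    intro x hx
    exact (h hx).resolve_left (fun hc => hA ⟨x, hx, hc⟩)

theorem Full.centralizer_sub [Finite V] {C : Set V} {k k' z : GG Γ} (hk : Full C k) (hC : Conn Γ C)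
    (hk' : k' ∈ par C) (hkk : Commute k' k) (hz : Commute z k) : Commute z k' := by
  have h1 := hk.centralizer hz
  have h3 : z = pj C z * pj (perp Γ C) z := by
    rw [← pj_union le_rfl]
    exact (mem_par.1 h1).symm
  have h4 : Commute (pj (perp Γ C) z) k' := (par_commute le_rfl hk' (pj_mem _ z)).symm
  have h5 : Commute (pj C z) k := by
    have := hz.map (pj C)
    rwa [mem_par.1 hk.1] at this
  rw [h3]
  exact (hk.abelian hC (pj_mem _ z) h5 hk' hkk).mul_left h4

theorem pure_commute [Finite V] {p k p' k' : GG Γ} {C C' : Set V} (hk : Full C k) (hC : Conn Γ C)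
    (hk' : Full C' k') (hC' : Conn Γ C') (h : Commute (p * k * p⁻¹) (p' * k' * p'⁻¹)) :
    (∀ y ∈ par C, Commute (p' * k' * p'⁻¹) (p * y * p⁻¹)) ∨
      ∀ z, Commute z (p * k * p⁻¹) ↔ Commute z (p' * k' * p'⁻¹) := by
  obtain ⟨q, rfl⟩ : ∃ q, p' = p * q := ⟨p⁻¹ * p', by group⟩
  have e : p * q * k' * (p * q)⁻¹ = p * (q * k' * q⁻¹) * p⁻¹ := by group
  rw [e] at h ⊢
  rw [commute_conj_conj] at h
  have h1 := hk.centralizer h.symm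
  have s1 := hC'.subset_or (hk'.subset h1)
  have h2 : Commute (q⁻¹ * k * q) k' := commute_conj.1 h
  have s2 := hC.subset_or (hk.subset' (hk'.centralizer h2))
  have h3 : q * k' * q⁻¹ = pj C (q * k' * q⁻¹) * pj (perp Γ C) (q * k' * q⁻¹) := by
    rw [← pj_union le_rfl]
    exact (mem_par.1 h1).symm
  have hdis : ∀ A : Set V, A ∩ C' = ∅ → pj A (q * k' * q⁻¹) = 1 := by
    intro A hA
    have : pj A k' = 1 := by
      have := pj_mem_par (S := A) hk'.1
      rw [hA] at this
      exact par_empty this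
    rw [map_mul, map_mul, this]; simp
  rcases s1 with s1 | s1
  · right
    have s2 : C ⊆ C' := by
      refine s2.resolve_right (fun s2 => ?_)
      obtain ⟨x, hx⟩ := hC'.1
      exact perp_self_disj hx (s2 (s1 hx))
    obtain rfl : C = C' := Set.Subset.antisymm s2 s1
    rw [hdis (perp Γ C) (by
      ext x; simp only [Set.mem_inter_iff, Set.mem_empty_iff_false, iff_false, not_and]
      intro h h'; exact perp_self_disj h' h), mul_one] at h3
    have h4 : q * k' * q⁻¹ ∈ par C := by rw [h3]; exact pj_mem _ _
    have h5 : Full C (q * k' * q⁻¹) := by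
      refine ⟨h4, ?_⟩
      intro r a ha hr
      refine hk'.2 (r * q) a ha ?_
      convert hr using 1
      group
    intro z
    rw [commute_conj, commute_conj]
    exact ⟨fun hz => hk.centralizer_sub hC h4 h.symm hz, fun hz => h5.centralizer_sub hC hk.1 h hz⟩
  · left
    intro y hy
    rw [commute_conj_conj]
    rw [hdis C (by
      ext x; simp only [Set.mem_inter_iff, Set.mem_empty_iff_false, iff_false, not_and]
      intro h h'; exact perp_self_disj h (s1 h')), one_mul] at h3
    rw [h3]
    exact (par_commute le_rfl hy (pj_mem _ _)).symm

/-- (L) -/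
theorem commute_of_two {t : V} {z h : GG Γ} (hz : z ∈ par ({t}ᶜ : Set V))
    (hzt : ¬ Commute z (gen t)) (h1 : Commute h z) (h2 : Commute h (gen t * z * (gen t)⁻¹)) :
    Commute h (gen t) := by
  have he0 : z • (e0 t : Cst Γ t) ≠ e0 t := fun h => hzt (lk_commute (smul_e0.1 h))
  set r : FreeGroup (Cst Γ t) →* FreeGroup (Cst Γ t) :=
    FreeGroup.lift (fun c => if c = e0 t then 1 else FreeGroup.of c) with hr
  have hfix : ∀ y : FreeGroup (Cst Γ t), act t z y = y → r y = y := by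
    intro y hy
    have hl := fun p hp => act_fixed_letter (p := p) hy hp
    have : ∀ L : List (Cst Γ t × Bool), (∀ p ∈ L, z • p.1 = p.1) →
        r (FreeGroup.mk L) = FreeGroup.mk L := by
      intro L
      induction L with
      | nil => intro _; exact map_one r
      | cons a L ih =>
        intro hL
        have e1 : FreeGroup.mk (a :: L) = FreeGroup.mk [a] * FreeGroup.mk L := by
          rw [FreeGroup.mul_mk]; rfl
        rw [e1, map_mul, ih (fun p hp => hL p (List.mem_cons_of_mem _ hp))]
        congr 1
        have ha : a.1 ≠ e0 t := by
          intro h; apply he0; rw [← h]; exact hL a List.mem_cons_self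
        rw [hr, FreeGroup.lift_mk]
        rcases a with ⟨c, b⟩
        cases b
        · simp only at ha; simp [ha, FreeGroup.of, FreeGroup.inv_mk, FreeGroup.invRev]
        · simp only at ha; simp [ha, FreeGroup.of]
    have h3 := this y.toWord hl
    rwa [FreeGroup.mk_toWord] at h3
  set f := fc t h with hf
  set κ := pj ({t}ᶜ : Set V) h with hκ
  set e : FreeGroup (Cst Γ t) := FreeGroup.of (e0 t) with he
  have hre : r e = 1 := by rw [hr, he]; simp
  have hzf : act t z f = f := by
    have := congrArg (fun g => av t g 1) h1.eq
    simp only [av_mul] at this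
    rw [av_mem hz 1, map_one, av_base, av_mem hz] at this
    exact this.symm
  have havt : ∀ v, av t (gen t : GG Γ) v = e * v := by
    intro v
    rw [av, fc_gen, pj_gen_notMem (by simp), map_one]; rfl
  have havt' : ∀ v, av t (gen t : GG Γ)⁻¹ v = e⁻¹ * v := by
    intro v
    have : e⁻¹ * v = av t ((gen t : GG Γ)⁻¹ * gen t) (e⁻¹ * v) := by
      rw [inv_mul_cancel, av_one]
    rw [this, av_mul, havt, mul_inv_cancel_left]
  have hh : ∀ v, av t h v = f * act t κ v := fun v => rfl
  have hy : act t z (e⁻¹ * (f * FreeGroup.of (κ • e0 t))) =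
      e⁻¹ * (f * FreeGroup.of (κ • e0 t)) := by
    have := congrArg (fun g => av t g e) h2.eq
    simp only [av_mul] at this
    rw [havt', inv_mul_cancel, av_mem hz 1, map_one, havt, mul_one, hh, he, act_of, havt', av_mem hz,
      havt] at this
    exact eq_inv_mul_of_mul_eq this.symm
  have hry := hfix _ hy
  have hrf := hfix _ hzf
  have hre1 : e ≠ 1 := FreeGroup.of_ne_one _
  have hκe : κ • (e0 t : Cst Γ t) = e0 t := by
    by_contra hne
    rw [map_mul, map_inv, hre, map_mul, hrf, hr, FreeGroup.lift_apply_of, if_neg hne] at hry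
    simp at hry
    exact hre1 hry
  rw [hκe] at hry
  rw [map_mul, map_inv, hre, map_mul, hrf, hre] at hry
  have hfe : f * e = e * f := by
    have := congrArg (fun y => e * y) hry
    simp only [inv_one, one_mul, mul_one] at this
    rw [this, mul_inv_cancel_left]
  have hf1 : f = 1 := by
    by_contra hf1
    rcases hw : f.toWord with _ | ⟨b, L⟩
    · exact hf1 (FreeGroup.toWord_eq_nil_iff.1 hw)
    · have hb : b.1 ≠ e0 t := by
        intro h
        apply he0
        rw [← h]
        exact act_fixed_letter hzf (by rw [hw]; exact List.mem_cons_self)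
      have e1 : (e * f).toWord = (e0 t, true) :: b :: L := by
        rw [FreeGroup.toWord_mul, he, FreeGroup.toWord_of, List.singleton_append,
          FreeGroup.reduce.cons, FreeGroup.reduce_toWord, hw]
        simp [hb.symm]
      have e2 : (f * e).toWord = f.toWord ++ e.toWord := by
        refine (FreeGroup.toWord_mul_sublist f e).eq_of_length_le ?_
        rw [hfe, e1, hw, he, FreeGroup.toWord_of]
        simp
      rw [hfe, e1, hw, List.cons_append, List.cons.injEq] at e2
      exact hb (by rw [← e2.1])
  have h5 : h = κ := by
    have := decomp t h
    rw [← hf, hf1, map_one, one_mul] at this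
    exact this.symm
  rw [h5]
  exact lk_commute (smul_e0.1 hκe)

theorem gen_full [Finite V] (a : V) : Full {a} (gen a : GG Γ) := by
  refine ⟨gen_mem rfl, ?_⟩
  intro p b hb h
  rw [Set.mem_singleton_iff] at hb
  subst hb
  rw [sdiff_self] at h
  have h1 := par_empty h
  apply gen_ne_one (Γ := Γ) b
  have : (gen b : GG Γ) = p⁻¹ * (p * gen b * p⁻¹) * p := by group
  rw [this, h1]; simp

theorem single_conn (a : V) : Conn Γ {a} := by
  refine ⟨⟨a, rfl⟩, ?_⟩
  intro A hA hne _
  exact (Set.subset_singleton_iff_eq.1 hA).resolve_left hne.ne_empty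

/-- Conjugate of a generator. -/
def CG (x : GG Γ) : Prop := ∃ p a, x = p * gen a * p⁻¹

theorem CG.pure [Finite V] {x : GG Γ} (h : CG x) : Pure x := by
  obtain ⟨p, a, rfl⟩ := h
  exact ⟨p, gen a, {a}, rfl, gen_full a, single_conn a⟩

theorem CG.conj {x : GG Γ} (h : CG x) (g : GG Γ) : CG (g * x * g⁻¹) := by
  obtain ⟨p, a, rfl⟩ := h
  exact ⟨g * p, a, by group⟩

theorem commute_conj_iff {G : Type*} [Group G] {h z d : G} (hd : Commute h d) :
    Commute h (d * z * d⁻¹) ↔ Commute h z := by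
  rw [commute_conj]
  have : d⁻¹ * h * d = h := by rw [mul_assoc, hd.eq]; group
  rw [this]

theorem exists_common [Finite V] {C : Set V} (hC : Conn Γ C) {h h' : GG Γ}
    (hh : ∃ a ∈ C, ¬ Commute h (gen a)) (hh' : ∃ a ∈ C, ¬ Commute h' (gen a)) :
    ∃ x ∈ par C, CG x ∧ ¬ Commute h x ∧ ¬ Commute h' x := by
  by_contra hno
  push Not at hno
  have hgen : ∀ a ∈ C, ¬ Commute h (gen a) → Commute h' (gen a) := fun a ha =>
    hno (gen a) (gen_mem ha) ⟨1, a, by simp⟩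
  obtain ⟨a, ha, hha⟩ := hh
  obtain ⟨b, hb, hhb⟩ := hh'
  let N : Set V := {c ∈ C | Commute h' (gen c)}
  have hNC : N ⊆ C := fun c hc => hc.1
  have hN' : ∀ z ∈ par N, Commute h' z := fun z hz => commute_of_gens (fun v hv => hv.2) hz
  let B : Set V := {c ∈ N | ∃ z ∈ par N, CG z ∧ ¬ Commute h z ∧ z ∉ par ({c}ᶜ : Set V)}
  have hBN : B ⊆ N := fun c hc => hc.1
  have haB : a ∈ B := ⟨⟨ha, hgen a ha hha⟩, gen a, gen_mem ⟨ha, hgen a ha hha⟩, ⟨1, a, by simp⟩,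
    hha, by rw [gen_mem_iff]; simp⟩
  have hbB : b ∉ B := fun h => hhb (hBN h).2
  have hsub : ¬ C \ B ⊆ perp Γ B := by
    intro h
    have := hC.2 B (hBN.trans hNC) ⟨a, haB⟩ h
    rw [this] at hbB
    exact hbB hb
  obtain ⟨t, ⟨htC, htB⟩, ht⟩ := Set.not_subset.1 hsub
  simp only [perp, Set.mem_ofPred_eq, not_forall, not_and, not_not] at ht
  obtain ⟨c, hcB, hct⟩ := ht
  have hne : c ≠ t := by rintro rfl; exact htB hcB
  have hadj := hct hne
  obtain ⟨hcN, z, hzN, hz, hhz, hzc⟩ := hcB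
  have hkey : ∀ w ∈ par ({t}ᶜ : Set V), w = z → ¬ Commute z (gen t) := by
    rintro w hw rfl hcomm
    apply hzc
    refine par_mono ?_ (mem_lk_of_commute hw hcomm)
    rintro s ⟨_, hs⟩ rfl
    exact hs hadj
  by_cases htN : t ∈ N
  · by_cases hztt : z ∈ par ({t}ᶜ : Set V)
    · have hzt := hkey z hztt rfl
      have hht : Commute h (gen t) := by
        by_contra hht
        exact htB ⟨htN, gen t, gen_mem htN, ⟨1, t, by simp⟩, hht, by rw [gen_mem_iff]; simp⟩
      have hgt : (gen t : GG Γ) ∈ par N := gen_mem htN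
      refine htB ⟨htN, gen t * z * (gen t)⁻¹, mul_mem (mul_mem hgt hzN) (inv_mem hgt), hz.conj _,
        fun h' => hhz ((commute_conj_iff hht).1 h'), ?_⟩
      intro hmem
      apply hzt
      have e : pj ({t}ᶜ : Set V) (gen t : GG Γ) = 1 := pj_gen_notMem (by simp)
      have := mem_par.1 hmem
      rw [map_mul, map_mul, map_inv, e, mem_par.1 hztt] at this
      simp only [one_mul, inv_one, mul_one] at this
      show z * gen t = gen t * z
      conv_lhs => rw [this]
      group
    · exact htB ⟨htN, z, hzN, hz, hhz, hztt⟩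
  · have htN' : ¬ Commute h' (gen t) := fun h => htN ⟨htC, h⟩
    have hht : Commute h (gen t) := by
      by_contra hht
      exact htN' (hgen t htC hht)
    have hztt : z ∈ par ({t}ᶜ : Set V) := par_mono (by
      rintro s hs rfl; exact htN hs) hzN
    have hzt := hkey z hztt rfl
    have hgt : (gen t : GG Γ) ∈ par C := gen_mem htC
    have := hno (gen t * z * (gen t)⁻¹) (mul_mem (mul_mem hgt (par_mono hNC hzN)) (inv_mem hgt))
      (hz.conj _) (fun h' => hhz ((commute_conj_iff hht).1 h'))
    exact htN' (commute_of_two hztt hzt (hN' z hzN) this)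

theorem pat_sep {n : ℕ} (hn : 4 ≤ n) {i j : ℕ} (hi : i < n) (hj : j < n) (hij : i ≠ j)
    (hc : ¬ cons2 i j) : ∃ l < n, ¬ (cons2 l i ↔ cons2 l j) := by
  unfold cons2 at *
  rcases Nat.lt_or_gt_of_ne hij with h | h
  · by_cases h0 : i = 0
    · by_cases h2 : j = 2
      · exact ⟨3, by omega, by omega⟩
      · exact ⟨1, by omega, by omega⟩
    · exact ⟨i - 1, by omega, by omega⟩
  · by_cases h0 : j = 0
    · by_cases h2 : i = 2
      · exact ⟨3, by omega, by omega⟩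
      · exact ⟨1, by omega, by omega⟩
    · exact ⟨j - 1, by omega, by omega⟩

theorem Pat.replace [Finite V] {n : ℕ} (hn : 4 ≤ n) {F : ℕ → GG Γ} (hF : ∀ i < n, Pure (F i))
    (hP : Pat n F) {m : ℕ} (hm : m < n) : ∃ x, CG x ∧ Pat n (Function.update F m x) := by
  obtain ⟨a, b, ha, hb, ham, hbm, hab⟩ : ∃ a b, a < n ∧ b < n ∧ cons2 m a ∧ cons2 m b ∧
      ∀ j < n, cons2 m j → j = a ∨ j = b := by
    unfold cons2
    by_cases h0 : m = 0
    · exact ⟨1, 1, by omega, by omega, by omega, by omega, by omega⟩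
    · by_cases h1 : m + 1 = n
      · exact ⟨m - 1, m - 1, by omega, by omega, by omega, by omega, by omega⟩
      · exact ⟨m - 1, m + 1, by omega, by omega, by omega, by omega, by omega⟩
  obtain ⟨p, k, C, hFm, hk, hC⟩ := hF m hm
  have hnc : ∀ c < n, cons2 m c → ∃ d ∈ C, ¬ Commute (p⁻¹ * F c * p) (gen d) := by
    intro c hc hmc
    by_contra hno
    push Not at hno
    have h1 := commute_of_gens hno hk.1
    rw [← commute_conj, ← hFm] at h1
    exact (hP m hm c hc).1 h1.symm hmc
  obtain ⟨y, hyC, hy, hya, hyb⟩ := exists_common hC (hnc a ha ham) (hnc b hb hbm)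
  rw [← commute_conj] at hya hyb
  have hcm : ∀ j < n, j ≠ m → (Commute (p * y * p⁻¹) (F j) ↔ ¬ cons2 m j) := by
    intro j hj hjm
    constructor
    · intro h hc
      rcases hab j hj hc with rfl | rfl
      · exact hya h.symm
      · exact hyb h.symm
    · intro hc
      obtain ⟨p', k', C', hFj, hk', hC'⟩ := hF j hj
      have h1 := (hP m hm j hj).2 hc
      rw [hFm, hFj] at h1
      rcases pure_commute hk hC hk' hC' h1 with h2 | h2
      · rw [hFj]; exact (h2 y hyC).symm
      · exfalso
        obtain ⟨l, hl, hlc⟩ := pat_sep hn hm hj hjm.symm hc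
        have h3 := h2 (F l)
        rw [← hFm, ← hFj, hP l hl m hm, hP l hl j hj] at h3
        tauto
  refine ⟨p * y * p⁻¹, hy.conj p, ?_⟩
  intro i hi j hj
  by_cases him : i = m
  · subst him
    by_cases hjm : j = i
    · subst hjm
      simp [cons2]
    · rw [Function.update_self, Function.update_of_ne hjm]
      exact hcm j hj hjm
  · by_cases hjm : j = m
    · subst hjm
      rw [Function.update_self, Function.update_of_ne him, cons2_symm, ← hcm i hi him]
      exact ⟨fun h => h.symm, fun h => h.symm⟩
    · rw [Function.update_of_ne hjm, Function.update_of_ne him]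
      exact hP i hi j hj

theorem exists_CG [Finite V] {n : ℕ} (hn : 4 ≤ n) {F : ℕ → GG Γ} (hF : ∀ i < n, Pure (F i))
    (hP : Pat n F) : ∃ x : ℕ → GG Γ, (∀ i < n, CG (x i)) ∧ Pat n x := by
  have : ∀ m ≤ n, ∃ x : ℕ → GG Γ, (∀ i < n, Pure (x i)) ∧ (∀ i < m, CG (x i)) ∧ Pat n x := by
    intro m
    induction m with
    | zero => intro _; exact ⟨F, hF, by simp, hP⟩
    | succ m ih =>
      intro hm
      obtain ⟨x, h1, h2, h3⟩ := ih (by omega)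
      obtain ⟨y, hy, h4⟩ := h3.replace hn h1 (show m < n by omega)
      refine ⟨_, ?_, ?_, h4⟩
      · intro i hi
        by_cases h : i = m
        · subst h; rw [Function.update_self]; exact hy.pure
        · rw [Function.update_of_ne h]; exact h1 i hi
      · intro i hi
        by_cases h : i = m
        · subst h; rw [Function.update_self]; exact hy
        · rw [Function.update_of_ne h]; exact h2 i (by omega)
  obtain ⟨x, _, h2, h3⟩ := this n le_rfl
  exact ⟨x, h2, h3⟩

end G2

section G3
open scoped Classical

/-- The reduced word starts with a given letter. -/
def SW {α : Type*} (l : α × Bool) (v : FreeGroup α) : Prop := ∃ L, v.toWord = l :: L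

theorem toWord_mul_letter {α : Type*} (v : FreeGroup α) (s : α × Bool) :
    (v * FreeGroup.mk [s]).toWord = v.toWord ++ [s] ∨
      ∃ w, v.toWord = w ++ [(s.1, !s.2)] ∧ (v * FreeGroup.mk [s]).toWord = w := by
  have hs : (FreeGroup.mk [s]).toWord = [s] := by simp [FreeGroup.toWord_mk]
  rcases List.eq_nil_or_concat v.toWord with h | ⟨w, q, h⟩
  · left
    rw [FreeGroup.toWord_eq_nil_iff] at h
    subst h
    simp
  · rw [List.concat_eq_append] at h
    by_cases hq : q = (s.1, !s.2)
    · right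
      refine ⟨w, by rw [h, hq], ?_⟩
      have e : v * FreeGroup.mk [s] = FreeGroup.mk w := by
        rw [← FreeGroup.mk_toWord (x := v), h, hq, ← FreeGroup.mul_mk, mul_assoc,
          FreeGroup.mul_mk]
        have : FreeGroup.mk ([(s.1, !s.2)] ++ [s]) = 1 := by
          rcases s with ⟨a, b⟩
          have : (FreeGroup.mk ([(a, !b)] ++ [(a, b)])) = (FreeGroup.mk [(a, b)])⁻¹ *
              FreeGroup.mk [(a, b)] := by
            rw [FreeGroup.inv_mk, FreeGroup.mul_mk]; rfl
          rw [this, inv_mul_cancel]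
        rw [this, mul_one]
      rw [e]
      exact toWord_mk_of h (List.prefix_append w _).isInfix
    · left
      rw [FreeGroup.toWord_mul, hs]
      apply FreeGroup.IsReduced.reduce_eq
      have h1 : FreeGroup.IsReduced v.toWord := FreeGroup.isReduced_toWord
      rw [FreeGroup.IsReduced, List.isChain_append]
      refine ⟨h1, by simp, ?_⟩
      intro x hx y hy hxy
      rw [h] at hx
      simp at hx hy
      subst hx hy
      by_contra hne
      apply hq
      ext
      · exact hxy
      · simp
        cases h2 : q.2 <;> cases h3 : s.2 <;> simp_all

theorem SW_step {α : Type*} {l s : α × Bool} {u : FreeGroup α} (hu : ¬ SW l u)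
    (h : SW l (u * FreeGroup.mk [s])) : u = 1 ∧ s = l := by
  obtain ⟨L, hL⟩ := h
  rcases toWord_mul_letter u s with h | ⟨w, hw, h⟩
  · rw [hL] at h
    rcases hw : u.toWord with _ | ⟨q, M⟩
    · rw [hw] at h
      simp at h
      exact ⟨FreeGroup.toWord_eq_nil_iff.1 hw, h.1.symm⟩
    · rw [hw] at h
      simp at h
      exact absurd ⟨M, by rw [hw, h.1]⟩ hu
  · rw [hL] at h
    rw [← h] at hw
    exact absurd ⟨_, hw⟩ hu

theorem SW_flip {α : Type*} {c : α} {b : Bool} {v : FreeGroup α}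
    (hno : ¬ SW (c, b) (FreeGroup.mk [(c, b)] * v)) : SW (c, !b) v := by
  rcases hfw : v.toWord with _ | ⟨s, L⟩
  · exfalso
    apply hno
    rw [FreeGroup.toWord_eq_nil_iff] at hfw
    rw [hfw, mul_one]
    exact ⟨[], by simp [FreeGroup.toWord_mk]⟩
  · by_cases hs : s = (c, !b)
    · exact ⟨L, by rw [hfw, hs]⟩
    · exfalso
      apply hno
      refine ⟨s :: L, ?_⟩
      rw [FreeGroup.toWord_mul]
      have e : (FreeGroup.mk [(c, b)]).toWord = [(c, b)] := by
        simp [FreeGroup.toWord_mk]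
      rw [e, List.singleton_append, FreeGroup.reduce.cons, FreeGroup.reduce_toWord, hfw]
      simp only
      rw [if_neg]
      rintro ⟨h2, h3⟩
      apply hs
      ext
      · exact h2.symm
      · rw [h3]; simp

theorem SW_cross {α : Type*} {l : α × Bool} (L : List (α × Bool)) : ∀ {u : FreeGroup α}, ¬ SW l u →
    SW l (u * FreeGroup.mk L) → ∃ L1 L2, L = L1 ++ l :: L2 ∧ u * FreeGroup.mk L1 = 1 := by
  induction L with
  | nil =>
    intro u hu h
    rw [← FreeGroup.one_eq_mk, mul_one] at h
    exact absurd h hu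
  | cons s L ih =>
    intro u hu h
    have e : FreeGroup.mk (s :: L) = FreeGroup.mk [s] * FreeGroup.mk L := by
      rw [FreeGroup.mul_mk]; rfl
    rw [e, ← mul_assoc] at h
    by_cases hs : SW l (u * FreeGroup.mk [s])
    · obtain ⟨rfl, rfl⟩ := SW_step hu hs
      exact ⟨[], L, rfl, by rw [← FreeGroup.one_eq_mk, mul_one]⟩
    · obtain ⟨L1, L2, rfl, h2⟩ := ih hs h
      refine ⟨s :: L1, L2, rfl, ?_⟩
      have e : FreeGroup.mk (s :: L1) = FreeGroup.mk [s] * FreeGroup.mk L1 := by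
        rw [FreeGroup.mul_mk]; rfl
      rw [e, ← mul_assoc, h2]

variable {V : Type} {Γ : SimpleGraph V}

/-- A letter as a group element. -/
def gl (t : V) (b : Bool) : GG Γ := if b then gen t else (gen t)⁻¹

/-- Evaluate a word. -/
def ev (w : List (V × Bool)) : GG Γ := (w.map fun p => gl p.1 p.2).prod

theorem ev_append (w w' : List (V × Bool)) : (ev (w ++ w') : GG Γ) = ev w * ev w' := by
  simp [ev]

theorem ev_cons (p : V × Bool) (w' : List (V × Bool)) :
    (ev (p :: w') : GG Γ) = gl p.1 p.2 * ev w' := by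
  simp [ev]

theorem gl_inv (t : V) (b : Bool) : (gl t b : GG Γ)⁻¹ = gl t (!b) := by
  cases b <;> simp [gl]

theorem commute_gl {t : V} {b : Bool} {x : GG Γ} : Commute x (gl t b) ↔ Commute x (gen t) := by
  cases b <;> simp [gl]

theorem gl_mem {t : V} {b : Bool} {S : Set V} (h : t ∈ S) : (gl t b : GG Γ) ∈ par S := by
  cases b
  · exact inv_mem (gen_mem h)
  · exact gen_mem h

theorem exists_ev (g : GG Γ) : ∃ w, g = ev w := by
  induction g using gg_induction with
  | h1 => exact ⟨[], rfl⟩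
  | hm x y hx hy =>
    obtain ⟨w, rfl⟩ := hx
    obtain ⟨w', rfl⟩ := hy
    exact ⟨w ++ w', (ev_append _ _).symm⟩
  | hi x hx =>
    obtain ⟨w, rfl⟩ := hx
    induction w with
    | nil => exact ⟨[], by simp [ev]⟩
    | cons p w ih =>
      obtain ⟨w', hw'⟩ := ih
      refine ⟨w' ++ [(p.1, !p.2)], ?_⟩
      rw [ev_cons, mul_inv_rev, hw', ev_append, gl_inv]
      simp [ev]
  | hg v => exact ⟨[(v, true)], by simp [ev, gl]⟩

theorem pj_gl_self (t : V) (b : Bool) : pj ({t}ᶜ : Set V) (gl t b : GG Γ) = 1 := by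
  have e : pj ({t}ᶜ : Set V) (gen t : GG Γ) = 1 := pj_gen_notMem (by simp)
  cases b <;> simp [gl, e]

theorem fc_gl (t : V) (b : Bool) : fc t (gl t b : GG Γ) = FreeGroup.mk [(e0 t, b)] := by
  cases b
  · have h : fc t ((gen t : GG Γ) * gl t false) = 1 := by simp [gl, fc_one]
    have e : pj ({t}ᶜ : Set V) (gen t : GG Γ) = 1 := pj_gen_notMem (by simp)
    rw [fc_mul, fc_gen, e, map_one, MulAut.one_apply] at h
    rw [eq_inv_of_mul_eq_one_right h, FreeGroup.of, FreeGroup.inv_mk]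
    rfl
  · exact fc_gen t

theorem act_letter (t : V) (g : GG Γ) (c : Cst Γ t) (b : Bool) :
    act t g (FreeGroup.mk [(c, b)]) = FreeGroup.mk [(g • c, b)] := by
  have h := act_of t g c
  cases b
  · have e : ∀ c : Cst Γ t, FreeGroup.mk [(c, false)] = (FreeGroup.of c)⁻¹ := fun c => by
      rw [FreeGroup.of, FreeGroup.inv_mk]; rfl
    rw [e, e, map_inv, h]
  · exact h

theorem fc_mul_mem {t : V} (g : GG Γ) {c : GG Γ} (hc : c ∈ par ({t}ᶜ : Set V)) :
    fc t (g * c) = fc t g := by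
  rw [fc_mul, fc_mem hc, map_one, mul_one]

theorem split_word {t : V} {b : Bool} (w : List (V × Bool))
    (h : SW (e0 t, b) (fc t (ev w : GG Γ))) :
    ∃ w1 w2, w = w1 ++ (t, b) :: w2 ∧ (ev w1 : GG Γ) ∈ par (lk Γ t) := by
  induction w using List.reverseRecOn with
  | nil =>
    obtain ⟨L, hL⟩ := h
    simp [ev, fc_one] at hL
  | append_singleton w s ih =>
    by_cases hw : SW (e0 t, b) (fc t (ev w : GG Γ))
    · obtain ⟨w1, w2, rfl, h2⟩ := ih hw
      exact ⟨w1, w2 ++ [s], by simp, h2⟩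
    · have e : (ev [s] : GG Γ) = gl s.1 s.2 := by simp [ev]
      rw [ev_append, e] at h
      by_cases hs : s.1 = t
      · rw [hs, fc_mul, fc_gl, act_letter] at h
        obtain ⟨h1, h2⟩ := SW_step hw h
        have h3 := mem_of_fc h1
        rw [mem_par.1 h3, Prod.mk.injEq] at h2
        refine ⟨w, [], ?_, smul_e0.1 h2.1⟩
        rw [← hs, ← h2.2]
      · rw [fc_mul_mem _ (gl_mem hs)] at h
        exact absurd h hw

theorem base_eq [Finite V] {p q : GG Γ} {a b : V} (h : p * gen a * p⁻¹ = q * gen b * q⁻¹) :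
    a = b := by
  have h1 : (q⁻¹ * p) * gen a * (q⁻¹ * p)⁻¹ ∈ (par {b} : Subgroup (GG Γ)) := by
    have : (q⁻¹ * p) * gen a * (q⁻¹ * p)⁻¹ = gen b := by
      calc _ = q⁻¹ * (p * gen a * p⁻¹) * q := by group
        _ = gen b := by rw [h]; group
    rw [this]; exact gen_mem rfl
  exact (gen_full a).subset h1 rfl

theorem par_single {t : V} {x : GG Γ} (hx : x ∈ par {t}) : ∃ j : ℤ, x = gen t ^ j := by
  refine par_induction (p := fun x => ∃ j : ℤ, x = gen t ^ j) ?_ ?_ ?_ ?_ hx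
  · exact ⟨0, by simp⟩
  · rintro x y ⟨i, rfl⟩ ⟨j, rfl⟩; exact ⟨i + j, by rw [zpow_add]⟩
  · rintro x ⟨i, rfl⟩; exact ⟨-i, by simp⟩
  · rintro v rfl; exact ⟨1, by simp⟩

theorem cent_gen [Finite V] {t : V} {z : GG Γ} (h : Commute z (gen t)) :
    ∃ j : ℤ, ∃ c ∈ par (lk Γ t), z = gen t ^ j * c := by
  have h1 := (gen_full t).centralizer h
  obtain ⟨j, hj⟩ := par_single (pj_mem {t} z)
  refine ⟨j, pj (perp Γ {t}) z, ?_, ?_⟩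
  · exact par_mono (fun s hs => mem_perp_singleton.1 hs) (pj_mem _ z)
  · rw [← hj, ← pj_union le_rfl]
    exact (mem_par.1 h1).symm

theorem common_conj [Finite V] {p q : GG Γ} {a b : V}
    (h : Commute (p * gen a * p⁻¹) (q * gen b * q⁻¹)) (hne : p * gen a * p⁻¹ ≠ q * gen b * q⁻¹) :
    ∃ r, p * gen a * p⁻¹ = r * gen a * r⁻¹ ∧ q * gen b * q⁻¹ = r * gen b * r⁻¹ ∧ b ∈ lk Γ a := by
  obtain ⟨s, rfl⟩ : ∃ s, q = p * s := ⟨p⁻¹ * q, by group⟩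
  have e : p * s * gen b * (p * s)⁻¹ = p * (s * gen b * s⁻¹) * p⁻¹ := by group
  rw [e] at h hne ⊢
  rw [commute_conj_conj] at h
  have h1 := (gen_full a).centralizer h.symm
  have h2 := (gen_full b).subset h1 rfl
  have h3 : s * gen b * s⁻¹ = pj {a} (s * gen b * s⁻¹) * pj (perp Γ {a}) (s * gen b * s⁻¹) := by
    rw [← pj_union le_rfl]
    exact (mem_par.1 h1).symm
  rcases h2 with h2 | h2
  · exfalso
    rw [Set.mem_singleton_iff] at h2
    subst h2
    apply hne
    have e1 : pj (perp Γ {b}) (gen b : GG Γ) = 1 := pj_gen_notMem (perp_self_disj rfl)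
    have e2 : pj {b} (gen b : GG Γ) = gen b := pj_gen_mem (Set.mem_singleton b)
    obtain ⟨j, hj⟩ := par_single (pj_mem {b} s)
    have h4 : s * gen b * s⁻¹ = gen b := by
      rw [h3]
      simp only [map_mul, map_inv, e1, e2, hj, mul_one, mul_inv_cancel]
      rw [← zpow_add_one, ← zpow_neg, ← zpow_add]
      simp
    rw [h4]
  · have hba : b ≠ a := fun h => (h2 a rfl).1 h.symm
    have e1 : pj {a} (gen b : GG Γ) = 1 := pj_gen_notMem (by simpa using hba)
    have e2 : pj (perp Γ {a}) (gen b : GG Γ) = gen b := pj_gen_mem h2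
    have hs : pj (perp Γ {a}) s ∈ par (lk Γ a) :=
      par_mono (fun x hx => mem_perp_singleton.1 hx) (pj_mem _ s)
    have hc := (lk_commute hs).eq
    have h4 : s * gen b * s⁻¹ = pj (perp Γ {a}) s * gen b * (pj (perp Γ {a}) s)⁻¹ := by
      conv_lhs => rw [h3]
      simp only [map_mul, map_inv, e1, e2, mul_one, mul_inv_cancel, one_mul]
    refine ⟨p * pj (perp Γ {a}) s, ?_, ?_, mem_perp_singleton.1 h2⟩
    · calc p * gen a * p⁻¹ = p * (gen a * pj (perp Γ {a}) s) * (pj (perp Γ {a}) s)⁻¹ * p⁻¹ := by group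
        _ = _ := by rw [← hc]; group
    · rw [h4]; group

theorem conv_ne {t a : V} {p r : GG Γ} {b : Bool} (hat : a ≠ t)
    (h : p * gen a * p⁻¹ = r * gen a * r⁻¹) (hp : SW (e0 t, b) (fc t p))
    (hr : ¬ SW (e0 t, b) (fc t r)) : Commute (p * gen a * p⁻¹) (gen t) := by
  have hfix : ∀ q : GG Γ, av t (q * gen a * q⁻¹) (fc t q) = fc t q := by
    intro q
    rw [← av_base t q, ← av_mul, inv_mul_cancel_right, av_mul,
      av_base t (gen a), fc_mem (gen_mem hat)]
  have h1 := hfix p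
  have h2 := hfix r
  rw [← h] at h2
  set x := p * gen a * p⁻¹ with hx
  rw [av] at h1 h2
  have h3 : act t (pj ({t}ᶜ : Set V) x) ((fc t r)⁻¹ * fc t p) = (fc t r)⁻¹ * fc t p := by
    rw [map_mul, map_inv, eq_inv_mul_of_mul_eq h1, eq_inv_mul_of_mul_eq h2]
    group
  have h4 : SW (e0 t, b) (fc t r * FreeGroup.mk ((fc t r)⁻¹ * fc t p).toWord) := by
    rwa [FreeGroup.mk_toWord, mul_inv_cancel_left]
  obtain ⟨L1, L2, hL, hL1⟩ := SW_cross _ hr h4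
  have h5 : ∀ s ∈ L1 ++ (e0 t, b) :: L2, pj ({t}ᶜ : Set V) x • s.1 = s.1 := fun s hs =>
    act_fixed_letter h3 (by rw [hL]; exact hs)
  have h6 : act t (pj ({t}ᶜ : Set V) x) (fc t r) = fc t r := by
    rw [eq_inv_of_mul_eq_one_left hL1, map_inv]
    congr 1
    have : ∀ M : List (Cst Γ t × Bool), (∀ s ∈ M, pj ({t}ᶜ : Set V) x • s.1 = s.1) →
        act t (pj ({t}ᶜ : Set V) x) (FreeGroup.mk M) = FreeGroup.mk M := by
      intro M
      induction M with
      | nil => intro _; exact map_one _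
      | cons s M ih =>
        intro hM
        have e : FreeGroup.mk (s :: M) = FreeGroup.mk [(s.1, s.2)] * FreeGroup.mk M := by
          rw [FreeGroup.mul_mk]; rfl
        rw [e, map_mul, ih (fun q hq => hM q (List.mem_cons_of_mem _ hq)), act_letter,
          hM s List.mem_cons_self]
    exact this L1 (fun s hs => h5 s (by simp [hs]))
  rw [h6] at h2
  have h7 := mem_of_fc (mul_eq_right.1 h2)
  have h8 := h5 (e0 t, b) (by simp)
  rw [mem_par.1 h7] at h8
  exact lk_commute (smul_e0.1 h8)

theorem fc_mul_zpow (t : V) (q : GG Γ) (j : ℤ) :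
    ∃ (n : ℕ) (b : Bool), ∀ i ≤ n, ∃ k : ℤ, (i = n → k = j) ∧ fc t (q * gen t ^ k) =
      fc t q * FreeGroup.mk (List.replicate i (pj ({t}ᶜ : Set V) q • e0 t, b)) := by
  have key : ∀ (b : Bool) (i : ℕ), fc t (q * (gl t b) ^ i) =
      fc t q * FreeGroup.mk (List.replicate i (pj ({t}ᶜ : Set V) q • e0 t, b)) := by
    intro b i
    induction i with
    | zero => simp [← FreeGroup.one_eq_mk]
    | succ i ih =>
      rw [pow_succ, ← mul_assoc, fc_mul, ih, fc_gl, map_mul, map_pow, pj_gl_self, one_pow, mul_one,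
        act_letter, List.replicate_succ', mul_assoc, FreeGroup.mul_mk]
  obtain ⟨n, rfl | rfl⟩ := j.eq_nat_or_neg
  · refine ⟨n, true, fun i _ => ⟨i, by simp, ?_⟩⟩
    rw [← key]; simp [gl]
  · refine ⟨n, false, fun i _ => ⟨-i, by simp, ?_⟩⟩
    rw [← key]; simp [gl]

theorem conv_eq [Finite V] {t : V} {p q : GG Γ} {b : Bool}
    (h : p * gen t * p⁻¹ = q * gen t * q⁻¹) (hp : SW (e0 t, b) (fc t p))
    (hq : ¬ SW (e0 t, b) (fc t q)) : Commute (q * gen t * q⁻¹) (gen t) := by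
  have h1 : Commute (q⁻¹ * p) (gen t) := by
    show _ = _
    calc q⁻¹ * p * gen t = q⁻¹ * (p * gen t * p⁻¹) * p := by group
      _ = _ := by rw [h]; group
  obtain ⟨j, c, hc, hj⟩ := cent_gen h1
  have hp' : p = q * gen t ^ j * c := by rw [mul_assoc, ← hj]; group
  rw [hp', fc_mul_mem _ (par_mono (lk_sub t) hc)] at hp
  obtain ⟨n, d, hn⟩ := fc_mul_zpow t q j
  obtain ⟨k, hk, hk'⟩ := hn n le_rfl
  rw [hk rfl] at hk'
  rw [hk'] at hp
  obtain ⟨L1, L2, hL, hL1⟩ := SW_cross _ hq hp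
  obtain ⟨hlen, hr1, hr2⟩ := List.replicate_eq_append_iff.1 hL
  have hmem : ((e0 t, b) : Cst Γ t × Bool) ∈
      List.replicate n (pj ({t}ᶜ : Set V) q • (e0 t : Cst Γ t), d) := by
    rw [hL]; simp
  have hmem := (List.mem_replicate.1 hmem).2
  rw [Prod.mk.injEq] at hmem
  rw [hr1] at hL1
  obtain ⟨k, -, hk⟩ := hn L1.length (by omega)
  rw [← hk] at hL1
  have h2 := mem_of_fc hL1
  have h3 : q * gen t ^ k = pj ({t}ᶜ : Set V) q := by
    have := mem_par.1 h2
    have e : pj ({t}ᶜ : Set V) (gen t : GG Γ) = 1 := pj_gen_notMem (by simp)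
    rw [map_mul, map_zpow, e, one_zpow, mul_one] at this
    exact this.symm
  have h4 : (q * gen t ^ k) ∈ par (lk Γ t) := by
    rw [h3]; exact smul_e0.1 hmem.1.symm
  have h5 := (lk_commute h4).eq
  have h6 : q * gen t * q⁻¹ = gen t := by
    calc q * gen t * q⁻¹ = (q * gen t ^ k * gen t) * (gen t ^ (-k) * q⁻¹) := by group
      _ = _ := by rw [h5]; group
  rw [h6]

/-- `x` lies on the `(t,b)` side. -/
def PP (t : V) (b : Bool) (x : GG Γ) : Prop :=
  ¬ Commute x (gen t) ∧ ∃ p a, x = p * gen a * p⁻¹ ∧ SW (e0 t, b) (fc t p)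

theorem PP.indep [Finite V] {t a : V} {b : Bool} {x q : GG Γ} (h : PP t b x)
    (hq : x = q * gen a * q⁻¹) : SW (e0 t, b) (fc t q) := by
  obtain ⟨h1, p, a', hp, h2⟩ := h
  obtain rfl := base_eq (hp.symm.trans hq)
  by_contra h3
  apply h1
  by_cases hat : a' = t
  · subst hat
    rw [hq]
    exact conv_eq (hp.symm.trans hq) h2 h3
  · rw [hp]
    exact conv_ne hat (hp.symm.trans hq) h2 h3

/-- (F1) -/
theorem PP.of_commute [Finite V] {t : V} {b : Bool} {x y : GG Γ} (h : PP t b x) (hxy : Commute x y)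
    (hy : CG y) (hyt : ¬ Commute y (gen t)) : PP t b y := by
  by_cases hne : x = y
  · rwa [← hne]
  obtain ⟨h1, p, a, hp, h2⟩ := id h
  obtain ⟨q, a', hq⟩ := hy
  rw [hp, hq] at hxy hne
  obtain ⟨r, hr1, hr2, -⟩ := common_conj hxy hne
  rw [← hp] at hr1
  rw [← hq] at hr2
  exact ⟨hyt, r, a', hr2, h.indep hr1⟩

/-- length of conjugator -/
noncomputable def clen (x : GG Γ) : ℕ :=
  sInf {m | ∃ w a, w.length = m ∧ x = ev w * gen a * (ev w)⁻¹}

theorem clen_le {x : GG Γ} {w : List (V × Bool)} {a : V} (h : x = ev w * gen a * (ev w)⁻¹) :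
    clen x ≤ w.length := Nat.sInf_le ⟨w, a, rfl, h⟩

theorem CG.exists_clen {x : GG Γ} (h : CG x) :
    ∃ w a, w.length = clen x ∧ x = ev w * gen a * (ev w)⁻¹ := by
  obtain ⟨p, a, rfl⟩ := h
  obtain ⟨w, rfl⟩ := exists_ev p
  have hne : {m | ∃ (w' : List (V × Bool)) (a' : V), w'.length = m ∧
      (ev w * gen a * (ev w)⁻¹ : GG Γ) = ev w' * gen a' * (ev w')⁻¹}.Nonempty :=
    ⟨w.length, w, a, rfl, rfl⟩
  exact Nat.sInf_mem hne

/-- (F2) -/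
theorem PP.clen_lt [Finite V] {t : V} {b : Bool} {x : GG Γ} (h : PP t b x) :
    clen ((gl t b)⁻¹ * x * gl t b) < clen x := by
  have hx : CG x := by
    obtain ⟨_, p, a, hp, _⟩ := h
    exact ⟨p, a, hp⟩
  obtain ⟨w, a, hw, hwx⟩ := hx.exists_clen
  obtain ⟨w1, w2, rfl, hw1⟩ := split_word w (h.indep hwx)
  have hc : gl t b * ev w1 = ev w1 * gl t b := (commute_gl.2 (lk_commute hw1)).symm.eq
  have h2 : (gl t b)⁻¹ * x * gl t b = ev (w1 ++ w2) * gen a * (ev (w1 ++ w2))⁻¹ := by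
    have e : ev (w1 ++ (t, b) :: w2) = (gl t b : GG Γ) * ev (w1 ++ w2) := by
      rw [ev_append, ev_append, ev_cons, ← mul_assoc, ← mul_assoc, hc]
    rw [hwx, e]
    group
  have h3 := clen_le h2
  rw [← hw]
  simp at h3 ⊢
  omega

theorem CG.exists_PP [Finite V] {x : GG Γ} (h : CG x) (h0 : clen x ≠ 0) : ∃ t b, PP t b x := by
  obtain ⟨w, a, hw, hwx⟩ := h.exists_clen
  rcases w with _ | ⟨⟨t, b⟩, w⟩
  · exact absurd hw.symm h0
  refine ⟨t, b, ?_, ev ((t, b) :: w), a, hwx, ?_⟩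
  · intro hc
    have h1 : x = ev w * gen a * (ev w)⁻¹ := by
      have h2 : (gl t b)⁻¹ * x * gl t b = x := by
        rw [mul_assoc, (commute_gl.2 hc).eq]; group
      rw [← h2, hwx, ev_cons]
      group
    have := clen_le h1
    simp at hw
    omega
  · by_contra hno
    rw [ev_cons, fc_mul, fc_gl, pj_gl_self, map_one, MulAut.one_apply] at hno
    have h1 : SW (e0 t, !b) (fc t (ev w : GG Γ)) := SW_flip hno
    obtain ⟨w1, w2, rfl, hw1⟩ := split_word w h1
    have hc : gl t b * ev w1 = ev w1 * gl t b := (commute_gl.2 (lk_commute hw1)).symm.eq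
    have e : ev ((t, b) :: (w1 ++ (t, !b) :: w2)) = (ev (w1 ++ w2) : GG Γ) := by
      rw [ev_cons, ev_append, ev_cons, ev_append, ← mul_assoc, hc, ← gl_inv]
      group
    rw [e] at hwx
    have := clen_le hwx
    simp at hw this
    omega

theorem clen_gen (t : V) : clen (gen t : GG Γ) = 0 := by
  have := clen_le (x := (gen t : GG Γ)) (w := []) (a := t) (by simp [ev])
  simpa using this

end G3

section G4
open scoped Classical

variable {V : Type} {Γ : SimpleGraph V}

theorem fold_B2 {G : Type*} [Group G] {n : ℕ} {r : ℕ → G} {g : G} {P N : ℕ → Prop} {c : ℕ}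
    (hc : c + 2 < n)
    (h1 : ∀ i < n, ∀ j < n, ¬ (P i ∧ N j) → ¬ (N i ∧ P j) → (Commute (r i) (r j) ↔ ¬ cons2 i j))
    (h2 : ∀ i < n, ∀ j < n, P i → N j → cons2 i j)
    (h3 : ∀ i < n, (Commute (r i) g ↔ ¬ (P i ∨ N i)))
    (hP : P c) (hN : N (c + 1)) (hP' : P (c + 2)) :
    Pat n (fun i => if i = c + 1 then g else r i) := by
  have hT : ∀ i < n, (P i ∨ N i) → i = c ∨ i = c + 1 ∨ i = c + 2 := by
    rintro i hi (h | h)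
    · have := h2 i hi (c + 1) (by omega) h hN
      unfold cons2 at this; omega
    · have := h2 c (by omega) i hi hP h
      have := h2 (c + 2) (by omega) i hi hP' h
      unfold cons2 at *; omega
  have hN1 : ∀ i < n, N i → i = c + 1 := by
    intro i hi h
    have := h2 c (by omega) i hi hP h
    have := h2 (c + 2) (by omega) i hi hP' h
    unfold cons2 at *; omega
  have key : ∀ i < n, i ≠ c + 1 → (Commute (r i) g ↔ ¬ cons2 i (c + 1)) := by
    intro i hi hne
    rw [h3 i hi, not_iff_not]
    constructor
    · intro h
      have := hT i hi h
      unfold cons2; omega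
    · intro h
      left
      have : i = c ∨ i = c + 2 := by unfold cons2 at h; omega
      rcases this with rfl | rfl <;> assumption
  intro i hi j hj
  by_cases hic : i = c + 1
  · by_cases hjc : j = c + 1
    · subst hic hjc
      simp [cons2]
    · simp only [if_pos hic, if_neg hjc]
      rw [hic, cons2_symm, ← key j hj hjc]
      exact ⟨fun h => h.symm, fun h => h.symm⟩
  · by_cases hjc : j = c + 1
    · simp only [if_pos hjc, if_neg hic]
      rw [hjc, ← key i hi hic]
    · simp only [if_neg hjc, if_neg hic]
      exact h1 i hi j hj (fun h => hjc (hN1 j hj h.2)) (fun h => hic (hN1 i hi h.1))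

theorem fold_B1 {G : Type*} [Group G] {n : ℕ} {r : ℕ → G} {g : G} {P N : ℕ → Prop} {c : ℕ}
    (hc : c + 1 < n)
    (h1 : ∀ i < n, ∀ j < n, ¬ (P i ∧ N j) → ¬ (N i ∧ P j) → (Commute (r i) (r j) ↔ ¬ cons2 i j))
    (h3 : ∀ i < n, (Commute (r i) g ↔ ¬ (P i ∨ N i)))
    (hT : ∀ i < n, (P i ∨ N i) ↔ (i = c ∨ i = c + 1))
    (hpn : ∀ i, ¬ (P i ∧ N i))
    (hcc : Commute (r c) (r (c + 1))) :
    Pat n (fun i => if i < c then r (i + 1) else if i = c then g else r i) := by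
  have key : ∀ i < n, ∀ j < n, i < j → (Commute (r i) (r j) ↔ ¬ (j = i + 1 ∧ i ≠ c)) := by
    intro i hi j hj hij
    by_cases h : i = c ∧ j = c + 1
    · rw [h.1, h.2]; simp [hcc]
    · rw [h1 i hi j hj]
      · unfold cons2; omega
      · intro h'
        have a1 := (hT i hi).1 (Or.inl h'.1)
        have a2 := (hT j hj).1 (Or.inr h'.2)
        omega
      · intro h'
        have a1 := (hT i hi).1 (Or.inr h'.1)
        have a2 := (hT j hj).1 (Or.inl h'.2)
        omega
  have keyt : ∀ i < n, (Commute (r i) g ↔ ¬ (i = c ∨ i = c + 1)) := by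
    intro i hi; rw [h3 i hi, hT i hi]
  have main : ∀ i < n, ∀ j < n, i < j → (Commute ((fun i => if i < c then r (i + 1) else if i = c then g else r i) i)
     ((fun i => if i < c then r (i + 1) else if i = c then g else r i) j) ↔ ¬ j = i + 1) := by
    intro i hi j hj hij
    rcases lt_trichotomy i c with h | h | h
    · simp only [if_pos h]
      rcases lt_trichotomy j c with h' | h' | h'
      · simp only [if_pos h']
        rw [key _ (by omega) _ (by omega) (by omega)]; omega
      · simp only [h', lt_irrefl, if_false, if_true]
        rw [keyt _ (by omega)]; omega
      · simp only [if_neg (show ¬ j < c by omega), if_neg (show ¬ j = c by omega)]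
        rw [key _ (by omega) _ (by omega) (by omega)]; omega
    · simp only [h, lt_irrefl, if_false, if_true]
      simp only [if_neg (show ¬ j < c by omega), if_neg (show ¬ j = c by omega)]
      rw [show Commute g (r j) ↔ Commute (r j) g from ⟨fun h => h.symm, fun h => h.symm⟩, keyt _ hj]
      omega
    · simp only [if_neg (show ¬ j < c by omega), if_neg (show ¬ j = c by omega), if_neg (show ¬ i < c by omega), if_neg (show ¬ i = c by omega)]
      rw [key _ (by omega) _ (by omega) (by omega)]; omega
  intro i hi j hj
  rcases lt_trichotomy i j with h | h | h
  · rw [main i hi j hj h]; unfold cons2; omega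
  · subst h; simp [cons2]
  · rw [show ∀ a b : G, Commute a b ↔ Commute b a from fun a b => ⟨fun h => h.symm, fun h => h.symm⟩,
      main j hj i hi h]; unfold cons2; omega

theorem sum_shift (a : ℕ → ℕ) (n c : ℕ) (hc : c < n) :
    ∑ i ∈ Finset.range n, (if i < c then a (i + 1) else if i = c then 0 else a i) + a 0
      = ∑ i ∈ Finset.range n, a i := by
  induction n, hc using Nat.le_induction with
  | base =>
    rw [Finset.sum_range_succ, Finset.sum_range_succ' a c]
    simp only [lt_irrefl, if_false, if_true, add_zero]
    congr 1
    apply Finset.sum_congr rfl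
    intro i hi
    rw [if_pos (Finset.mem_range.1 hi)]
  | succ n hn ih =>
    rw [Finset.sum_range_succ, Finset.sum_range_succ a n, ← ih,
      if_neg (by omega), if_neg (by omega)]
    omega

theorem fold_bad {G : Type*} [Group G] {n : ℕ} {r : ℕ → G} {g : G} {P N : ℕ → Prop} {c : ℕ}
    (f : G → ℕ) (hf : f g = 0)
    (hc : c + 1 < n)
    (h1 : ∀ i < n, ∀ j < n, ¬ (P i ∧ N j) → ¬ (N i ∧ P j) → (Commute (r i) (r j) ↔ ¬ cons2 i j))
    (h2 : ∀ i < n, ∀ j < n, P i → N j → cons2 i j)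
    (h3 : ∀ i < n, (Commute (r i) g ↔ ¬ (P i ∨ N i)))
    (hpn : ∀ i, ¬ (P i ∧ N i))
    (hcc : Commute (r c) (r (c + 1))) (hP : P c) (hN : N (c + 1)) :
    ∃ y : ℕ → G, Pat n y ∧ (∀ i < n, y i = g ∨ ∃ j < n, y i = r j) ∧
      ∑ i ∈ Finset.range n, f (y i) ≤ ∑ i ∈ Finset.range n, f (r i) := by
  have hPs : ∀ i < n, P i → i = c ∨ i = c + 2 := by
    intro i hi h
    have := h2 i hi (c + 1) hc h hN
    unfold cons2 at this; omega
  have hNs : ∀ i < n, N i → i = c + 1 ∨ i + 1 = c := by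
    intro i hi h
    have := h2 c (by omega) i hi hP h
    unfold cons2 at this; omega
  have B2 : ∀ d < n, Pat n (fun i => if i = d then g else r i) →
      ∃ y : ℕ → G, Pat n y ∧ (∀ i < n, y i = g ∨ ∃ j < n, y i = r j) ∧
      ∑ i ∈ Finset.range n, f (y i) ≤ ∑ i ∈ Finset.range n, f (r i) := by
    intro d hd hp
    refine ⟨_, hp, ?_, ?_⟩
    · intro i hi
      by_cases h : i = d
      · left; simp [h]
      · right; exact ⟨i, hi, by simp [h]⟩
    · apply Finset.sum_le_sum
      intro i _
      by_cases h : i = d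
      · simp [h, hf]
      · simp [h]
  by_cases hA : c + 2 < n ∧ P (c + 2)
  · exact B2 _ (by omega) (fold_B2 hA.1 h1 h2 h3 hP hN hA.2)
  by_cases hB : ∃ d, d + 1 = c ∧ N d
  · obtain ⟨d, rfl, hd⟩ := hB
    refine B2 _ (by omega) (fold_B2 (P := N) (N := P) (c := d) (by omega) ?_ ?_ ?_ hd hP hN)
    · intro i hi j hj a b; exact h1 i hi j hj b a
    · intro i hi j hj a b; exact cons2_symm.1 (h2 j hj i hi b a)
    · intro i hi; rw [h3 i hi, or_comm]
  have hT : ∀ i < n, (P i ∨ N i) ↔ (i = c ∨ i = c + 1) := by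
    intro i hi
    constructor
    · rintro (h | h)
      · rcases hPs i hi h with h' | h'
        · exact Or.inl h'
        · subst h'; exact absurd ⟨hi, h⟩ hA
      · rcases hNs i hi h with h' | h'
        · exact Or.inr h'
        · exact absurd ⟨i, h', h⟩ hB
    · rintro (h | h)
      · rw [h]; exact Or.inl hP
      · rw [h]; exact Or.inr hN
  refine ⟨_, fold_B1 hc h1 h3 hT hpn hcc, ?_, ?_⟩
  · intro i hi
    rcases lt_trichotomy i c with h | h | h
    · right; exact ⟨i + 1, by omega, by simp [h]⟩
    · left; simp [h]
    · right; exact ⟨i, hi, by simp [show ¬ i < c by omega, show ¬ i = c by omega]⟩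
  · rw [← sum_shift (fun i => f (r i)) n c (by omega)]
    refine le_trans (le_of_eq ?_) (Nat.le_add_right _ _)
    apply Finset.sum_congr rfl
    intro i _
    split_ifs <;> simp [hf]

theorem fold_main [Finite V] {n : ℕ} (hn : 0 < n) (m : ℕ) : ∀ (x : ℕ → GG Γ), (∀ i < n, CG (x i)) → Pat n x →
    ∑ i ∈ Finset.range n, clen (x i) = m → ∃ a : ℕ → V, Pat n (fun i => (gen (a i) : GG Γ)) := by
  induction m using Nat.strong_induction_on with
  | _ m ih =>
  intro x hx hp hm
  by_cases h0 : ∀ i < n, clen (x i) = 0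
  · have : ∀ i, ∃ a, i < n → x i = gen a := by
      intro i
      by_cases hi : i < n
      · obtain ⟨w, a, hw, hxa⟩ := (hx i hi).exists_clen
        rw [h0 i hi, List.length_eq_zero_iff] at hw
        subst hw
        exact ⟨a, fun _ => by rw [hxa]; simp [ev]⟩
      · obtain ⟨p, a, _⟩ := hx 0 hn
        exact ⟨a, fun h => absurd h hi⟩
    choose a ha using this
    refine ⟨a, fun i hi j hj => ?_⟩
    show Commute (gen (a i) : GG Γ) (gen (a j)) ↔ _
    rw [← ha i hi, ← ha j hj]
    exact hp i hi j hj
  push Not at h0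
  obtain ⟨k, hk, hk0⟩ := h0
  obtain ⟨t, b, hPk⟩ := (hx k hk).exists_PP hk0
  set g : GG Γ := gl t b with hg
  set r : ℕ → GG Γ := fun i => if PP t b (x i) then g⁻¹ * x i * g else x i with hr
  set P : ℕ → Prop := fun i => PP t b (x i) with hPdef
  set N : ℕ → Prop := fun i => ¬ Commute (x i) (gen t) ∧ ¬ PP t b (x i) with hNdef
  have hPt : ∀ i, P i → ¬ Commute (x i) (gen t) := fun i h => h.1
  have rP : ∀ i, P i → r i = g⁻¹ * x i * g := fun i h => if_pos h
  have rn : ∀ i, ¬ P i → r i = x i := fun i h => if_neg h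
  have hrC : ∀ i < n, CG (r i) := by
    intro i hi
    by_cases h : P i
    · rw [rP i h]
      have := (hx i hi).conj g⁻¹
      rwa [inv_inv] at this
    · rw [rn i h]; exact hx i hi
  have hpn : ∀ i, ¬ (P i ∧ N i) := fun i h => h.2.2 h.1
  have hconj : ∀ u, Commute (g⁻¹ * u * g) (gen t) ↔ Commute u (gen t) := by
    intro u
    have hd : Commute (gen t) g⁻¹ := (Commute.inv_right (commute_gl.2 (Commute.refl _)))
    have := commute_conj_iff (z := u) hd
    rw [inv_inv] at this
    exact ⟨fun h => (this.1 h.symm).symm, fun h => (this.2 h.symm).symm⟩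
  have h3 : ∀ i < n, (Commute (r i) (gen t) ↔ ¬ (P i ∨ N i)) := by
    intro i hi
    by_cases h : P i
    · rw [rP i h, hconj]
      simp [h, hPt i h]
    · rw [rn i h]
      simp only [h, false_or, hNdef, not_and, not_not]
      constructor
      · intro h1 h2; exact absurd h1 h2
      · intro h1; by_contra h2; exact h (h1 h2)
  have hmix : ∀ i < n, ∀ j < n, P i → ¬ P j → ¬ N j → (Commute (r i) (r j) ↔ ¬ cons2 i j) := by
    intro i hi j hj h1 h2 h4
    rw [← hp i hi j hj, rP i h1, rn j h2]
    have hjt : Commute (x j) (gen t) := by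
      by_contra h; exact h4 ⟨h, h2⟩
    have hd : Commute (x j) g⁻¹ := Commute.inv_right (commute_gl.2 hjt)
    have := commute_conj_iff (z := x i) hd
    rw [inv_inv] at this
    exact ⟨fun h => (this.1 h.symm).symm, fun h => (this.2 h.symm).symm⟩
  have h1 : ∀ i < n, ∀ j < n, ¬ (P i ∧ N j) → ¬ (N i ∧ P j) →
      (Commute (r i) (r j) ↔ ¬ cons2 i j) := by
    intro i hi j hj a1 a2
    by_cases hPi : P i
    · by_cases hPj : P j
      · rw [← hp i hi j hj, rP i hPi, rP j hPj]
        have := commute_conj_conj (p := g⁻¹) (x := x i) (y := x j)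
        rwa [inv_inv] at this
      · exact hmix i hi j hj hPi hPj (fun h => a1 ⟨hPi, h⟩)
    · by_cases hPj : P j
      · rw [cons2_symm, ← hmix j hj i hi hPj hPi (fun h => a2 ⟨h, hPj⟩)]
        exact ⟨fun h => h.symm, fun h => h.symm⟩
      · rw [rn i hPi, rn j hPj]; exact hp i hi j hj
  have h2 : ∀ i < n, ∀ j < n, P i → N j → cons2 i j := by
    intro i hi j hj a1 a2
    by_contra hc
    have := (hp i hi j hj).2 hc
    exact a2.2 (a1.of_commute this (hx j hj) a2.1)
  have hlt : ∑ i ∈ Finset.range n, clen (r i) < ∑ i ∈ Finset.range n, clen (x i) := by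
    apply Finset.sum_lt_sum
    · intro i hi
      by_cases h : P i
      · rw [rP i h]; exact h.clen_lt.le
      · rw [rn i h]
    · refine ⟨k, Finset.mem_range.2 hk, ?_⟩
      rw [rP k hPk]; exact hPk.clen_lt
  have fin : (∃ y : ℕ → GG Γ, Pat n y ∧ (∀ i < n, y i = gen t ∨ ∃ j < n, y i = r j) ∧
      ∑ i ∈ Finset.range n, clen (y i) ≤ ∑ i ∈ Finset.range n, clen (r i)) →
      ∃ a : ℕ → V, Pat n (fun i => (gen (a i) : GG Γ)) := by
    rintro ⟨y, hy1, hy2, hy3⟩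
    refine ih _ (by rw [← hm]; exact lt_of_le_of_lt hy3 hlt) y ?_ hy1 rfl
    intro i hi
    rcases hy2 i hi with h | ⟨j, hj, h⟩
    · rw [h]; exact ⟨1, t, by simp⟩
    · rw [h]; exact hrC j hj
  apply fin
  by_cases hbad : ∃ i j, i < n ∧ j < n ∧ P i ∧ N j ∧ Commute (r i) (r j)
  · obtain ⟨i, j, hi, hj, a1, a2, a3⟩ := hbad
    rcases h2 i hi j hj a1 a2 with rfl | rfl
    · refine fold_bad (P := N) (N := P) clen (clen_gen t) hi ?_ ?_ ?_ (fun i h => hpn i h.symm) a3.symm a2 a1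
      · intro i hi j hj a b; exact h1 i hi j hj b a
      · intro i hi j hj a b; exact cons2_symm.1 (h2 j hj i hi b a)
      · intro i hi; rw [h3 i hi, or_comm]
    · exact fold_bad clen (clen_gen t) hj h1 h2 h3 hpn a3 a1 a2
  · refine ⟨r, ?_, fun i hi => Or.inr ⟨i, hi, rfl⟩, le_rfl⟩
    intro i hi j hj
    by_cases b1 : P i ∧ N j
    · exact ⟨fun h => absurd ⟨i, j, hi, hj, b1.1, b1.2, h⟩ hbad,
        fun h => absurd (h2 i hi j hj b1.1 b1.2) h⟩
    by_cases b2 : N i ∧ P j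
    · exact ⟨fun h => absurd ⟨j, i, hj, hi, b2.2, b2.1, h.symm⟩ hbad,
        fun h => absurd (cons2_symm.1 (h2 j hj i hi b2.2 b2.1)) h⟩
    exact h1 i hi j hj b1 b2

theorem commute_gen_iff {a b : V} : Commute (gen a : GG Γ) (gen b) ↔ ¬ Γ.Adj a b := by
  refine ⟨fun h hab => ?_, fun h => gen_commute h⟩
  have : (gen a : GG Γ) ∈ par ({b}ᶜ : Set V) := gen_mem (by simpa using hab.ne)
  have := gen_mem_iff.1 (mem_lk_of_commute this h)
  exact this.2 hab

theorem path_of_CG [Finite V] {n : ℕ} (hn : 4 ≤ n) {x : ℕ → GG Γ} (hx : ∀ i < n, CG (x i))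
    (hp : Pat n x) : ∃ a : ℕ → V, (∀ i < n, ∀ j < n, a i = a j → i = j) ∧
      ∀ i < n, ∀ j < n, (Γ.Adj (a i) (a j) ↔ cons2 i j) := by
  obtain ⟨a, ha⟩ := fold_main (by omega) _ x hx hp rfl
  have hA : ∀ i < n, ∀ j < n, (Γ.Adj (a i) (a j) ↔ cons2 i j) := by
    intro i hi j hj
    have := ha i hi j hj
    rw [commute_gen_iff] at this
    exact not_iff_not.1 this
  refine ⟨a, ?_, hA⟩
  intro i hi j hj h
  by_contra hij
  have hnc : ¬ cons2 i j := by
    rw [← hA i hi j hj, h]; exact Γ.loopless.irrefl _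
  obtain ⟨l, hl, h'⟩ := pat_sep hn hi hj hij hnc
  apply h'
  rw [← hA l hl i hi, ← hA l hl j hj, h]

end G4

section G5
open scoped Classical commutatorElement

variable {V W : Type} {Λ : SimpleGraph V} {Γ : SimpleGraph W}

/-- Retraction onto the group of an induced subgraph. -/
noncomputable def toInd (C : Set W) : GG Γ →* GG (Γ.induce C) :=
  liftG (fun v => if h : v ∈ C then gen ⟨v, h⟩ else 1) (by
    intro u v _ h
    split_ifs
    · exact gen_commute (by simpa using h)
    · exact Commute.one_right _
    · exact Commute.one_left _
    · exact Commute.one_left _)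

noncomputable def ofInd (C : Set W) : GG (Γ.induce C) →* GG Γ :=
  liftG (fun v => gen v.1) (by
    intro u v _ h
    exact gen_commute (by simpa using h))

theorem ofInd_toInd (C : Set W) (x : GG Γ) : ofInd C (toInd C x) = pj C x := by
  have : (ofInd C).comp (toInd C) = (pj C : GG Γ →* GG Γ) := by
    apply hom_ext
    intro v
    by_cases h : v ∈ C
    · rw [MonoidHom.comp_apply, toInd, liftG_gen, dif_pos h, ofInd, liftG_gen, pj_gen_mem h]
    · rw [MonoidHom.comp_apply, toInd, liftG_gen, dif_neg h, map_one, pj_gen_notMem h]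
  rw [← this]; rfl

theorem path_case [Finite V] [Finite W] (φ : GG Λ →* GG Γ) {C : Set W} (hC : Conn Γ C) {n : ℕ}
    (hn : 2 ≤ n) {v : ℕ → V} (hv : ∀ i < n, ∀ j < n, v i = v j → i = j)
    (ha : ∀ i < n, ∀ j < n, Λ.Adj (v i) (v j) ↔ cons2 i j) {I : Set V}
    (hI : ∀ i < n, v i ∈ I) (hinj : ∀ x ∈ par I, pj C (φ x) = 1 → x = 1) :
    ∃ a : ℕ → W, (∀ i < n, a i ∈ C) ∧ (∀ i < n, ∀ j < n, a i = a j → i = j) ∧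
      ∀ i < n, ∀ j < n, (Γ.Adj (a i) (a j) ↔ cons2 i j) := by
  by_cases h4 : 4 ≤ n
  · obtain ⟨F, hF, hP⟩ := exists_pure (Γ := Γ.induce C) (by omega) hv ha ((toInd C).comp φ) hI (by
      intro x hx h
      apply hinj x hx
      rw [← ofInd_toInd]
      rw [MonoidHom.comp_apply] at h
      rw [h, map_one])
    obtain ⟨x, hx, hP⟩ := exists_CG h4 hF hP
    obtain ⟨a, ha1, ha2⟩ := path_of_CG h4 hx hP
    refine ⟨fun i => (a i).1, fun i _ => (a i).2, ?_, ?_⟩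
    · intro i hi j hj h
      exact ha1 i hi j hj (Subtype.ext h)
    · intro i hi j hj
      rw [← ha2 i hi j hj]
      simp
  have hedge : ∃ a ∈ C, ∃ b ∈ C, Γ.Adj a b := by
    by_contra hno
    push Not at hno
    have h1 : Commute (pj C (φ (gen (v 0)))) (pj C (φ (gen (v 1)))) := by
      refine commute_of_gens (fun s hs => ?_) (pj_mem _ _)
      refine (commute_of_gens (fun t ht => ?_) (pj_mem _ _)).symm
      exact gen_commute (hno s hs t ht)
    have g0 : (gen (v 0) : GG Λ) ∈ par I := gen_mem (hI 0 (by omega))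
    have g1 : (gen (v 1) : GG Λ) ∈ par I := gen_mem (hI 1 (by omega))
    have h2 : ⁅(gen (v 0) : GG Λ), (gen (v 1) : GG Λ)⁆ = 1 := by
      apply hinj
      · rw [commutatorElement_def]
        exact mul_mem (mul_mem (mul_mem g0 g1) (inv_mem g0)) (inv_mem g1)
      · rw [map_commutatorElement, map_commutatorElement]
        exact commutatorElement_eq_one_iff_commute.2 h1
    have h3 := commutatorElement_eq_one_iff_commute.1 h2
    rw [commute_gen_iff] at h3
    exact h3 ((ha 0 (by omega) 1 (by omega)).2 (Or.inr rfl))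
  by_cases h2 : n = 2
  · subst h2
    obtain ⟨a, haC, b, hbC, hab⟩ := hedge
    refine ⟨fun i => if i = 0 then a else b, ?_, ?_, ?_⟩
    · intro i hi; dsimp only; split_ifs <;> assumption
    · intro i hi j hj h
      interval_cases i <;> interval_cases j <;> simp at h ⊢
      · exact hab.ne h
      · exact hab.ne h.symm
    · intro i hi j hj
      interval_cases i <;> interval_cases j <;> simp [cons2, hab, hab.symm]
  obtain rfl : n = 3 := by omega
  by_cases hP3 : ∃ a ∈ C, ∃ b ∈ C, ∃ c ∈ C, Γ.Adj a b ∧ Γ.Adj b c ∧ a ≠ c ∧ ¬ Γ.Adj a c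
  · obtain ⟨a, haC, b, hbC, c, hcC, hab, hbc, hac, hac'⟩ := hP3
    have hca' : ¬ Γ.Adj c a := fun h => hac' h.symm
    refine ⟨fun i => if i = 0 then a else if i = 1 then b else c, ?_, ?_, ?_⟩
    · intro i hi; dsimp only; split_ifs <;> assumption
    · intro i hi j hj h
      interval_cases i <;> interval_cases j <;> simp at h ⊢
      · exact hab.ne h
      · exact hac h
      · exact hab.ne h.symm
      · exact hbc.ne h
      · exact hac h.symm
      · exact hbc.ne h.symm
    · intro i hi j hj
      interval_cases i <;> interval_cases j <;> simp [cons2, hab, hab.symm, hbc, hbc.symm, hac', hca']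
  exfalso
  push Not at hP3
  obtain ⟨w0, hw0⟩ := hC.1
  have : Nonempty W := ⟨w0⟩
  have hsub : ({v 0, v 2} : Set V) ⊆ I := by
    rintro x (rfl | rfl)
    · exact hI 0 (by omega)
    · exact hI 2 (by omega)
  have hn02 : ¬ Λ.Adj (v 0) (v 2) := by
    rw [ha 0 (by omega) 2 (by omega)]; simp [cons2]
  obtain ⟨f, hf1, hf2⟩ := edgeless (Λ := Λ) (Γ := Γ) _ {v 0, v 2} C ((pj C).comp φ) rfl (by
      rintro a (rfl | rfl) b (rfl | rfl)
      · simp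
      · exact hn02
      · exact fun h => hn02 h.symm
      · simp) (fun x _ => pj_mem _ _) (fun x hx h => hinj x (par_mono hsub hx) h)
  have m0 : v 0 ∈ ({v 0, v 2} : Set V) := by simp
  have m2 : v 2 ∈ ({v 0, v 2} : Set V) := by simp
  have hne : f (v 0) ≠ f (v 2) := fun h => by
    have := hv _ (by omega) _ (by omega) ((hf2 _ m0 _ m2).1 h)
    omega
  have hna : ¬ Γ.Adj (f (v 0)) (f (v 2)) := fun h => hn02 ((hf2 _ m0 _ m2).2.1 h)
  have := hC.2 {z | z ∈ C ∧ (z = f (v 0) ∨ Γ.Adj (f (v 0)) z)} (fun z hz => hz.1)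
    ⟨f (v 0), hf1 _ m0, Or.inl rfl⟩ (by
      rintro t ⟨htC, ht⟩ s ⟨hsC, hs⟩
      have ht0 : t ≠ f (v 0) := fun h => ht ⟨htC, Or.inl h⟩
      have ht1 : ¬ Γ.Adj (f (v 0)) t := fun h => ht ⟨htC, Or.inr h⟩
      refine ⟨?_, ?_⟩
      · rintro rfl; exact ht ⟨hsC, hs⟩
      · intro hst
        rcases hs with rfl | hs
        · exact ht1 hst
        · exact ht1 (hP3 _ (hf1 _ m0) s hsC t htC hs hst ht0.symm))
  have hm : f (v 2) ∈ {z | z ∈ C ∧ (z = f (v 0) ∨ Γ.Adj (f (v 0)) z)} := by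
    rw [this]; exact hf1 _ m2
  rcases hm.2 with h | h
  · exact hne h.symm
  · exact hna h

theorem Emb_of_path {n : ℕ} {v : ℕ → V} {C : Set W} {a : ℕ → W}
    (hv : ∀ i < n, ∀ j < n, v i = v j → i = j)
    (ha : ∀ i < n, ∀ j < n, Λ.Adj (v i) (v j) ↔ cons2 i j)
    (h1 : ∀ i < n, a i ∈ C) (h2 : ∀ i < n, ∀ j < n, a i = a j → i = j)
    (h3 : ∀ i < n, ∀ j < n, (Γ.Adj (a i) (a j) ↔ cons2 i j)) :
    Emb Λ Γ {x | ∃ i < n, v i = x} C := by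
  have : ∀ x, ∃ i, (∃ i < n, v i = x) → i < n ∧ v i = x := by
    intro x
    by_cases h : ∃ i < n, v i = x
    · obtain ⟨i, hi⟩ := h; exact ⟨i, fun _ => hi⟩
    · exact ⟨0, fun h' => absurd h' h⟩
  choose k hk using this
  have hkv : ∀ i < n, k (v i) = i := by
    intro i hi
    have := hk (v i) ⟨i, hi, rfl⟩
    exact hv _ this.1 _ hi this.2
  refine ⟨fun x => a (k x), ?_, ?_⟩
  · rintro _ ⟨i, hi, rfl⟩
    dsimp only; rw [hkv i hi]; exact h1 i hi
  · rintro _ ⟨i, hi, rfl⟩ _ ⟨j, hj, rfl⟩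
    dsimp only; rw [hkv i hi, hkv j hj, h3 i hi j hj, ha i hi j hj]
    exact ⟨fun h => by rw [h2 i hi j hj h], Iff.rfl⟩

/-- paths in `U` -/
def IsP (Λ : SimpleGraph V) (U : Set V) (n : ℕ) (v : ℕ → V) : Prop :=
  (∀ i < n, v i ∈ U) ∧ (∀ i < n, ∀ j < n, v i = v j → i = j) ∧ ∀ i, i + 1 < n → Λ.Adj (v i) (v (i + 1))

theorem IsP.le [Finite V] {U : Set V} {n : ℕ} {v : ℕ → V} (h : IsP Λ U n v) : n ≤ Nat.card V := by
  have := Nat.card_le_card_of_injective (fun i : Fin n => v i.1) (by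
    intro i j hij
    exact Fin.ext (h.2.1 _ i.2 _ j.2 hij))
  simpa using this

theorem IsP.adj_iff {U : Set V} {n : ℕ} {v : ℕ → V} (h : IsP Λ U n v) (hac : Λ.IsAcyclic) :
    ∀ i < n, ∀ j < n, Λ.Adj (v i) (v j) ↔ cons2 i j := by
  have key : ∀ i < n, ∀ j < n, i + 1 < j → ¬ Λ.Adj (v i) (v j) := by
    intro i hi j hj hij hadj
    have hb := (SimpleGraph.isAcyclic_iff_forall_adj_isBridge.1 hac) hadj
    rw [SimpleGraph.isBridge_iff] at hb
    apply hb
    have : ∀ d, i + d ≤ j → (Λ \ SimpleGraph.fromEdgeSet {s(v i, v j)}).Reachable (v i) (v (i + d)) := by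
      intro d
      induction d with
      | zero => intro _; exact SimpleGraph.Reachable.refl _
      | succ d ih =>
        intro hd
        refine (ih (by omega)).trans (SimpleGraph.Adj.reachable ?_)
        rw [SimpleGraph.sdiff_adj]
        refine ⟨h.2.2 _ (by omega), ?_⟩
        rw [SimpleGraph.fromEdgeSet_adj]
        rintro ⟨h1, -⟩
        rw [Set.mem_singleton_iff, Sym2.eq_iff] at h1
        rcases h1 with ⟨h1, h2⟩ | ⟨h1, h2⟩
        · have := h.2.1 _ (by omega) _ (by omega) h1
          have := h.2.1 _ (by omega) _ (by omega) h2
          omega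
        · have := h.2.1 _ (by omega) _ (by omega) h1
          have := h.2.1 _ (by omega) _ (by omega) h2
          omega
    have := this (j - i) (by omega)
    rwa [show i + (j - i) = j by omega] at this
  intro i hi j hj
  constructor
  · intro hadj
    by_contra hc
    unfold cons2 at hc
    rcases lt_trichotomy i j with h' | h' | h'
    · exact key i hi j hj (by omega) hadj
    · subst h'; exact hadj.ne rfl
    · exact key j hj i hi (by omega) hadj.symm
  · rintro (rfl | rfl)
    · exact (h.2.2 _ hi).symm
    · exact h.2.2 _ hj

theorem exists_comp_path [Finite V] (hL : IsLinearForest Λ) {U : Set V} {a b : V} (ha : a ∈ U)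
    (hb : b ∈ U) (hab : Λ.Adj a b) :
    ∃ n v, 2 ≤ n ∧ IsP Λ U n v ∧ U \ {x | ∃ i < n, v i = x} ⊆ perp Λ {x | ∃ i < n, v i = x} := by
  have h2 : ∃ v, IsP Λ U 2 v := by
    refine ⟨fun i => if i = 0 then a else b, ?_, ?_, ?_⟩
    · intro i hi; dsimp only; split_ifs <;> assumption
    · intro i hi j hj h
      interval_cases i <;> interval_cases j <;> simp at h ⊢
      · exact hab.ne h
      · exact hab.ne h.symm
    · intro i hi
      obtain rfl : i = 0 := by omega
      simpa using hab
  have hle2 : 2 ≤ Nat.card V := by obtain ⟨v, hv⟩ := h2; exact hv.le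
  set n := Nat.findGreatest (fun n => ∃ v, IsP Λ U n v) (Nat.card V) with hn
  obtain ⟨v, hv⟩ : ∃ v, IsP Λ U n v := Nat.findGreatest_spec (P := fun n => ∃ v, IsP Λ U n v) hle2 h2
  have hn2 : 2 ≤ n := Nat.le_findGreatest hle2 h2
  have hmax : ∀ v', ¬ IsP Λ U (n + 1) v' := by
    intro v' hv'
    have : n + 1 ≤ n := Nat.le_findGreatest hv'.le ⟨v', hv'⟩
    omega
  refine ⟨n, v, hn2, hv, ?_⟩
  rintro u ⟨huU, hu⟩ _ ⟨k, hk, rfl⟩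
  have hune : ∀ i < n, v i ≠ u := fun i hi h => hu ⟨i, hi, h⟩
  refine ⟨hune k hk, ?_⟩
  intro hadj
  by_cases hk0 : k = 0
  · subst hk0
    refine hmax (fun i => if i = 0 then u else v (i - 1)) ⟨?_, ?_, ?_⟩
    · intro i hi
      by_cases h : i = 0
      · simpa [h] using huU
      · simpa [h] using hv.1 (i - 1) (by omega)
    · intro i hi j hj h
      by_cases h1 : i = 0 <;> by_cases h3 : j = 0
      · omega
      · simp only [if_pos h1, if_neg h3] at h
        exact absurd h.symm (hune _ (by omega))
      · simp only [if_pos h3, if_neg h1] at h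
        exact absurd h (hune _ (by omega))
      · simp only [if_neg h3, if_neg h1] at h
        have := hv.2.1 _ (by omega) _ (by omega) h
        omega
    · intro i hi
      by_cases h : i = 0
      · subst h; simpa using hadj.symm
      · have := hv.2.2 (i - 1) (by omega)
        rw [show i - 1 + 1 = i by omega] at this
        simpa [h] using this
  by_cases hkn : k + 1 = n
  · refine hmax (fun i => if i = n then u else v i) ⟨?_, ?_, ?_⟩
    · intro i hi
      by_cases h : i = n
      · simpa [h] using huU
      · simpa [h] using hv.1 i (by omega)
    · intro i hi j hj h
      by_cases h1 : i = n <;> by_cases h3 : j = n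
      · omega
      · simp only [if_pos h1, if_neg h3] at h
        exact absurd h.symm (hune _ (by omega))
      · simp only [if_pos h3, if_neg h1] at h
        exact absurd h (hune _ (by omega))
      · simp only [if_neg h3, if_neg h1] at h
        exact hv.2.1 _ (by omega) _ (by omega) h
    · intro i hi
      by_cases h : i = k
      · simp only [h, hkn, if_true, if_neg (show ¬ k = n by omega)]
        exact hadj
      · simp only [if_neg (show ¬ i = n by omega), if_neg (show ¬ i + 1 = n by omega)]
        exact hv.2.2 i (by omega)
  have a1 := hv.2.2 (k - 1) (by omega)
  rw [show k - 1 + 1 = k by omega] at a1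
  have a2 := hv.2.2 k (by omega)
  have hsub : ({v (k - 1), v (k + 1), u} : Set V) ⊆ Λ.neighborSet (v k) := by
    rintro x (rfl | rfl | rfl)
    · exact a1.symm
    · exact a2
    · exact hadj
  have hc : ({v (k - 1), v (k + 1), u} : Set V).ncard = 3 := by
    rw [Set.ncard_eq_three]
    refine ⟨_, _, _, ?_, hune _ (by omega), hune _ (by omega), rfl⟩
    intro h
    have := hv.2.1 _ (by omega) _ (by omega) h
    omega
  have := Set.ncard_le_ncard hsub (Set.toFinite _)
  have := hL.2 (v k)
  omega

theorem IsP.conn {U : Set V} {n : ℕ} {v : ℕ → V} (h : IsP Λ U n v) (hn : 0 < n) :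
    Conn Λ {x | ∃ i < n, v i = x} := by
  refine ⟨⟨v 0, 0, hn, rfl⟩, ?_⟩
  intro A hA hne hp
  have step : ∀ i, i + 1 < n → (v i ∈ A ↔ v (i + 1) ∈ A) := by
    intro i hi
    constructor
    · intro h1
      by_contra h2
      exact (hp ⟨⟨i + 1, hi, rfl⟩, h2⟩ _ h1).2 (h.2.2 i hi)
    · intro h1
      by_contra h2
      exact (hp ⟨⟨i, by omega, rfl⟩, h2⟩ _ h1).2 (h.2.2 i hi).symm
  have all : ∀ i < n, (v i ∈ A ↔ v 0 ∈ A) := by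
    intro i
    induction i with
    | zero => intro _; rfl
    | succ i ih => intro hi; rw [← step i hi, ih (by omega)]
  obtain ⟨x, hx⟩ := hne
  obtain ⟨i, hi, rfl⟩ := hA hx
  apply Set.Subset.antisymm hA
  rintro _ ⟨j, hj, rfl⟩
  rw [all j hj, ← all i hi]
  exact hx

theorem main_ind [Finite V] [Finite W] [Nonempty W] (hL : IsLinearForest Λ) (m : ℕ) :
    ∀ (U : Set V) (D : Set W) (φ : GG Λ →* GG Γ), U.ncard = m → (∀ x ∈ par U, φ x ∈ par D) →
    (∀ x ∈ par U, φ x = 1 → x = 1) → Emb Λ Γ U D := by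
  induction m using Nat.strong_induction_on with
  | _ m ih =>
  intro U D φ hm hD hinj
  by_cases he : ∀ a ∈ U, ∀ b ∈ U, ¬ Λ.Adj a b
  · exact edgeless _ U D φ hm he hD hinj
  push Not at he
  obtain ⟨a, ha, b, hb, hab⟩ := he
  obtain ⟨n, v, hn, hv, hperp⟩ := exists_comp_path hL ha hb hab
  set I : Set V := {x | ∃ i < n, v i = x} with hI
  have hIU : I ⊆ U := by rintro _ ⟨i, hi, rfl⟩; exact hv.1 i hi
  have hun : I ∪ U \ I = U := Set.union_sdiff_cancel hIU
  have hvI : ∀ i < n, v i ∈ I := fun i hi => ⟨i, hi, rfl⟩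
  have h01 : v 0 ≠ v 1 := fun h => by
    have := hv.2.1 _ (by omega) _ (by omega) h
    omega
  obtain ⟨φ', C, D', hC, hD', hCC, hp, h1, h2, h3⟩ := sep φ (hv.conn (by omega)) hperp
    (hvI 0 (by omega)) (hvI 1 (by omega)) h01 (by rw [← hI, hun]; exact hD)
    (by rw [← hI, hun]; exact hinj)
  have hadj := hv.adj_iff hL.1
  obtain ⟨c, c1, c2, c3⟩ := path_case φ' hCC hn hv.2.1 hadj hvI h1
  have e1 : Emb Λ Γ I C := Emb_of_path hv.2.1 hadj c1 c2 c3
  have hlt : (U \ I).ncard < m := by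
    rw [← hm]
    apply Set.ncard_lt_ncard _ (Set.toFinite _)
    refine ⟨Set.sdiff_subset, fun h => ?_⟩
    exact (h (hv.1 0 (by omega))).2 (hvI 0 (by omega))
  have e2 : Emb Λ Γ (U \ I) D' := ih _ hlt _ _ φ' rfl h2 h3
  rw [← hun]
  exact e1.union e2 hC hD' hp hperp

theorem main_thm [Finite V] [Finite W] (hL : IsLinearForest Λ) (φ : GG Λ →* GG Γ)
    (hφ : Function.Injective φ) : Nonempty (Λ ↪g Γ) := by
  rcases isEmpty_or_nonempty W with hW | hW
  · have hV : IsEmpty V := by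
      refine ⟨fun u => ?_⟩
      apply gen_ne_one (Γ := Λ) u
      apply hφ
      rw [map_one, ← pj_univ (φ (gen u)), Set.univ_eq_empty_iff.2 hW, pj_empty]
    exact ⟨⟨⟨fun u => hV.elim u, fun u => hV.elim u⟩, fun {u} => hV.elim u⟩⟩
  · obtain ⟨f, -, hf⟩ := main_ind (Λ := Λ) (Γ := Γ) hL _ Set.univ Set.univ φ rfl
      (fun x _ => mem_par_univ _) (fun x _ h => hφ (by rw [h, map_one]))
    exact ⟨⟨⟨f, fun u v h => (hf u trivial v trivial).1 h⟩, fun {u v} => (hf u trivial v trivial).2⟩⟩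

end G5

end RG

/-- If `Λ` is a linear forest and `G(Λ)` embeds into `G(Γ)`, then `Λ` is an induced
subgraph of `Γ`. -/
theorem statement0 {V W : Type} [Fintype V] [Fintype W]
    (Λ : SimpleGraph V) (Γ : SimpleGraph W) (hΛ : IsLinearForest Λ)
    (h : ∃ φ : GG Λ →* GG Γ, Function.Injective φ) :
    Nonempty (Λ ↪g Γ) := by
  obtain ⟨φ, hφ⟩ := h
  exact RG.main_thm hΛ φ hφ
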